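/- arXiv:1504.02425 — 2 statements merged into one kernel-verified Lean document; each statement's English description precedes it below -/
import Mathlib

section
/- Let α > 0, β > 0 and A, B ∈ ℝ, and for δ > 0 small let λˢ(δ) be the unique real (negative) eigenvalue and λᵘ(δ) one of the pair of complex conjugate non-real eigenvalues with positive real part of the matrix M_δ = [[0, 0, −α], [1/2, 3α/(2β), −β], [A/2, 1/(2δ) + B/2, −3β²/(8αδ)]]. Then the saddle quantity σ(δ) = λˢ(δ) + Re(λᵘ(δ)) satisfies σ(δ) + 3β²/(8αδ) → 17α/(12β) as δ → 0⁺; in particular there exists δ₀ > 0 such that σ(δ) < 0 for every δ ∈ (0, δ₀). -/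
/-!
The characteristic polynomial of `M δ` is
`X³ + (k/δ - p) X² + (c₁ - β/(16δ)) X + (α/(4δ) + c₀)` with `k = 3β²/(8α)`, `p = 3α/(2β)`.
Its strongly stable root is sought in the form `r = -k/δ + s`. Multiplying the equation by `δ²`
gives a polynomial equation `stableEqn … δ s = 0` that is regular at `δ = 0`, where it reduces to
`k² (s - p) + β k / 16 = 0`. The intermediate value theorem yields a solution `s δ` bounded
as `δ → 0⁺`, and the equation itself then forces `s δ → p - β/(16k)` (`exists_stableEqn`).

Dividing out `X - r` leaves `X² + (s - p) X + v`, where `s - p → -β/(16k)` and `v → α/(4k)`.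
The limiting discriminant is negative, so for small `δ` the other two roots are non-real with real
part `(p - s)/2`, and `σ(δ) + k/δ = (s + p)/2 → p - β/(32k) = 17α/(12β)`.
-/

open Filter Topology Polynomial

/-- The cubic `λ³ + (k/δ - p) λ² + (c₁ - b/δ) λ + (a/δ + c₀)` at `λ = -k/δ + s`,
multiplied by `δ²`. -/
def stableEqn (k p b c₁ a c₀ δ s : ℝ) : ℝ :=
  (δ * s - k) ^ 2 * (s - p) + (-b + c₁ * δ) * (δ * s - k) + δ * (a + c₀ * δ)

lemma exists_stableEqn (k p b c₁ a c₀ : ℝ) (hk : 0 < k) :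
    ∃ s : ℝ → ℝ, (∀ᶠ δ in 𝓝[>] (0 : ℝ), stableEqn k p b c₁ a c₀ δ (s δ) = 0) ∧
      Tendsto (fun δ => δ * s δ) (𝓝[>] 0) (𝓝 0) ∧
      Tendsto s (𝓝[>] 0) (𝓝 (p - b / k)) := by
  have hid : Tendsto (fun δ : ℝ => δ) (𝓝[>] 0) (𝓝 0) := tendsto_id.mono_left nhdsWithin_le_nhds
  have hcont : ∀ t : ℝ, Tendsto (fun δ => stableEqn k p b c₁ a c₀ δ t) (𝓝[>] 0)
      (𝓝 (stableEqn k p b c₁ a c₀ 0 t)) := by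
    intro t
    have : Continuous (fun δ => stableEqn k p b c₁ a c₀ δ t) := by
      unfold stableEqn; fun_prop
    exact (this.tendsto 0).mono_left nhdsWithin_le_nhds
  have hlo : stableEqn k p b c₁ a c₀ 0 (p - b / k - 1) < 0 := by
    have : stableEqn k p b c₁ a c₀ 0 (p - b / k - 1) = -k ^ 2 := by
      unfold stableEqn; field_simp; ring
    rw [this]; nlinarith
  have hhi : 0 < stableEqn k p b c₁ a c₀ 0 (p - b / k + 1) := by
    have : stableEqn k p b c₁ a c₀ 0 (p - b / k + 1) = k ^ 2 := by
      unfold stableEqn; field_simp; ring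
    rw [this]; positivity
  have hex : ∀ᶠ δ in 𝓝[>] (0 : ℝ), ∃ s : ℝ, s ∈ Set.Icc (p - b / k - 1) (p - b / k + 1) ∧
      stableEqn k p b c₁ a c₀ δ s = 0 := by
    filter_upwards [(hcont _).eventually_lt_const hlo, (hcont _).eventually_const_lt hhi]
      with δ h1 h2
    have hc : ContinuousOn (fun s => stableEqn k p b c₁ a c₀ δ s)
        (Set.Icc (p - b / k - 1) (p - b / k + 1)) := by
      unfold stableEqn; fun_prop
    obtain ⟨s, hs, h0⟩ := intermediate_value_Icc (by linarith) hc ⟨h1.le, h2.le⟩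
    exact ⟨s, hs, h0⟩
  obtain ⟨s, hs⟩ := hex.choice
  have hδs : Tendsto (fun δ => δ * s δ) (𝓝[>] 0) (𝓝 0) := by
    have hb : Tendsto (fun δ : ℝ => |δ| * (|p - b / k| + 1)) (𝓝[>] 0) (𝓝 0) := by
      simpa using hid.abs.mul_const (|p - b / k| + 1)
    refine squeeze_zero_norm' ?_ hb
    filter_upwards [hs] with δ h
    rw [norm_mul, Real.norm_eq_abs, Real.norm_eq_abs]
    refine mul_le_mul_of_nonneg_left ?_ (abs_nonneg _)
    have := h.1.1
    have := h.1.2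
    rw [abs_le]
    constructor <;> linarith [neg_abs_le (p - b / k), le_abs_self (p - b / k)]
  refine ⟨s, hs.mono fun _ h => h.2, hδs, ?_⟩
  -- The equation solved for the occurrence of `s` in the factor `s - p`.
  have hlim : Tendsto (fun δ => p - ((-b + c₁ * δ) * (δ * s δ - k) + δ * (a + c₀ * δ)) /
      (δ * s δ - k) ^ 2) (𝓝[>] 0)
      (𝓝 (p - ((-b + c₁ * 0) * (0 - k) + 0 * (a + c₀ * 0)) / (0 - k) ^ 2)) := by
    refine tendsto_const_nhds.sub (Tendsto.div ?_ ((hδs.sub_const k).pow 2) (by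
      simpa using hk.ne'))
    exact (((hid.const_mul c₁).const_add (-b)).mul (hδs.sub_const k)).add
      (hid.mul ((hid.const_mul c₀).const_add a))
  have hval : p - ((-b + c₁ * 0) * (0 - k) + 0 * (a + c₀ * 0)) / (0 - k) ^ 2 = p - b / k := by
    simp only [mul_zero, zero_mul, add_zero, zero_sub, neg_sq]
    field_simp
  rw [hval] at hlim
  refine hlim.congr' ?_
  filter_upwards [hs, hδs.eventually_lt_const hk] with δ h1 h2
  have hne : δ * s δ - k ≠ 0 := by linarith
  have h0 := h1.2
  unfold stableEqn at h0
  rw [sub_eq_iff_eq_add, ← sub_eq_iff_eq_add', eq_div_iff (pow_ne_zero 2 hne)]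
  linarith

/-- The characteristic polynomial evaluated in an `ℝ`-algebra, so that both real and complex
eigenvalues are covered. -/
lemma charpoly_eval {R : Type*} [CommRing R] [Algebra ℝ R] (α β A m p q : ℝ) (x : R) :
    aeval x (!![0, 0, -α; 1 / 2, p, -β; A / 2, m, q] : Matrix (Fin 3) (Fin 3) ℝ).charpoly =
      x ^ 3 - algebraMap ℝ R (p + q) * x ^ 2 + algebraMap ℝ R (p * q + β * m + α * A / 2) * x
        + algebraMap ℝ R (α * m / 2 - α * A * p / 2) := by
  have : (!![0, 0, -α; 1 / 2, p, -β; A / 2, m, q] : Matrix (Fin 3) (Fin 3) ℝ).charpoly =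
      X ^ 3 - C (p + q) * X ^ 2 + C (p * q + β * m + α * A / 2) * X
        + C (α * m / 2 - α * A * p / 2) := by
    rw [Matrix.charpoly, Matrix.det_fin_three]
    simp
    have e1 : α * A / 2 = α * (A * 2⁻¹) := by ring
    have e2 : α * m / 2 = α * (m * 2⁻¹) := by ring
    have e3 : α * A * p / 2 = α * (A * 2⁻¹) * p := by ring
    have e4 : A / 2 = A * 2⁻¹ := by ring
    rw [e1, e2, e3, e4]
    simp only [C_mul]
    ring
  rw [this]
  simp

/- STATEMENT 12: With λˢ(δ) the unique real (negative) eigenvalue and λᵘ(δ) one of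
the pair of complex conjugate non-real eigenvalues with positive real part of
M_δ = [[0,0,−α],[1/2, 3α/(2β), −β],[A/2, 1/(2δ)+B/2, −3β²/(8αδ)]], the saddle
quantity σ(δ) = λˢ(δ) + Re(λᵘ(δ)) satisfies σ(δ) + 3β²/(8αδ) → 17α/(12β) as
δ → 0⁺; in particular σ(δ) < 0 for every δ > 0 small enough. -/
theorem saddle_quantity_negative (α β A B : ℝ) (hα : 0 < α) (hβ : 0 < β)
    (M : ℝ → Matrix (Fin 3) (Fin 3) ℝ)
    (hM : ∀ δ : ℝ, M δ =
      !![0, 0, -α;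
         1 / 2, 3 * α / (2 * β), -β;
         A / 2, 1 / (2 * δ) + B / 2, -(3 * β ^ 2) / (8 * α * δ)]) :
    ∃ δ₀ > (0 : ℝ), ∃ (lams : ℝ → ℝ) (lamu : ℝ → ℂ),
      (∀ δ ∈ Set.Ioo (0 : ℝ) δ₀,
        lams δ < 0 ∧
        (∀ r : ℝ, Polynomial.eval r (M δ).charpoly = 0 ↔ r = lams δ) ∧
        0 < (lamu δ).re ∧ (lamu δ).im ≠ 0 ∧
        Polynomial.aeval (lamu δ) (M δ).charpoly = 0 ∧
        Polynomial.aeval ((starRingEnd ℂ) (lamu δ)) (M δ).charpoly = 0 ∧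
        lams δ + (lamu δ).re < 0) ∧
      Filter.Tendsto (fun δ : ℝ => lams δ + (lamu δ).re + 3 * β ^ 2 / (8 * α * δ))
        (nhdsWithin 0 (Set.Ioi 0)) (nhds (17 * α / (12 * β))) := by
  have hk : 0 < 3 * β ^ 2 / (8 * α) := by positivity
  obtain ⟨k, hkdef⟩ : ∃ k, k = 3 * β ^ 2 / (8 * α) := ⟨_, rfl⟩
  obtain ⟨p, hpdef⟩ : ∃ p, p = 3 * α / (2 * β) := ⟨_, rfl⟩
  obtain ⟨c₁, hc₁⟩ : ∃ c₁, c₁ = β * B / 2 + α * A / 2 := ⟨_, rfl⟩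
  obtain ⟨c₀, hc₀⟩ : ∃ c₀, c₀ = α * B / 4 - α * A * p / 2 := ⟨_, rfl⟩
  rw [← hkdef] at hk
  have hbk : β / 16 / k = α / (6 * β) := by rw [hkdef]; field_simp; norm_num
  have hid : Tendsto (fun δ : ℝ => δ) (𝓝[>] 0) (𝓝 0) := tendsto_id.mono_left nhdsWithin_le_nhds
  obtain ⟨s, hroot, hδs, hs⟩ := exists_stableEqn k p (β / 16) c₁ (α / 4) c₀ hk
  rw [hbk] at hs
  -- The quadratic cofactor of `X - r` is `X² + (s - p) X + v`.
  let v : ℝ → ℝ := fun δ => -(α / 4 + c₀ * δ) / (δ * s δ - k)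
  have hv : Tendsto v (𝓝[>] 0) (𝓝 (-(α / 4 + c₀ * 0) / (0 - k))) :=
    (((hid.const_mul c₀).const_add (α / 4)).neg).div (hδs.sub_const k) (by simpa using hk.ne')
  have hv0 : -(α / 4 + c₀ * 0) / (0 - k) = 2 * α ^ 2 / (3 * β ^ 2) := by
    simp only [mul_zero, add_zero, zero_sub, neg_div_neg_eq]
    rw [hkdef]; field_simp; norm_num
  rw [hv0] at hv
  have hu : Tendsto (fun δ => s δ - p) (𝓝[>] 0) (𝓝 (-(α / (6 * β)))) := by
    have := hs.sub_const p
    rwa [show p - α / (6 * β) - p = -(α / (6 * β)) by ring] at this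
  have hdisc : Tendsto (fun δ => v δ - (s δ - p) ^ 2 / 4) (𝓝[>] 0)
      (𝓝 (2 * α ^ 2 / (3 * β ^ 2) - (-(α / (6 * β))) ^ 2 / 4)) :=
    hv.sub ((hu.pow 2).div_const 4)
  have hdisc0 : 0 < 2 * α ^ 2 / (3 * β ^ 2) - (-(α / (6 * β))) ^ 2 / 4 := by
    have : 2 * α ^ 2 / (3 * β ^ 2) - (-(α / (6 * β))) ^ 2 / 4 = 95 * α ^ 2 / (144 * β ^ 2) := by
      field_simp; norm_num
    rw [this]; positivity
  have hsig : Tendsto (fun δ => δ * ((s δ + p) / 2)) (𝓝[>] 0)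
      (𝓝 (0 * ((p - α / (6 * β) + p) / 2))) := hid.mul ((hs.add_const p).div_const 2)
  rw [zero_mul] at hsig
  have hneg : -(α / (6 * β)) < 0 := by
    have : 0 < α / (6 * β) := by positivity
    linarith
  have hev := ((hroot.and (hδs.eventually_lt_const hk)).and
    ((hu.eventually_lt_const hneg).and (hdisc.eventually_const_lt hdisc0))).and
    (hsig.eventually_lt_const hk)
  obtain ⟨δ₀, hδ₀, hsub⟩ := mem_nhdsGT_iff_exists_Ioo_subset.1 hev
  refine ⟨δ₀, hδ₀, fun δ => -k / δ + s δ,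
    fun δ => ⟨(p - s δ) / 2, √(v δ - (s δ - p) ^ 2 / 4)⟩, ?_, ?_⟩
  · intro δ hδ
    obtain ⟨⟨⟨h0, h1⟩, h2, h3⟩, h4⟩ := hsub hδ
    have hδ0 : 0 < δ := hδ.1
    have hr : -k / δ + s δ = (δ * s δ - k) / δ := by field_simp; ring
    have hne : δ * s δ - k ≠ 0 := by linarith
    have hvr : v δ * (δ * s δ - k) = -(α / 4 + c₀ * δ) := div_mul_cancel₀ _ hne
    -- Coefficients of the characteristic polynomial in terms of `r`, `s - p` and `v`.
    have ec2 : 3 * α / (2 * β) + -(3 * β ^ 2) / (8 * α * δ) =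
        (-k / δ + s δ) - (s δ - p) := by
      rw [hkdef, hpdef]; field_simp; ring
    have ec1 : 3 * α / (2 * β) * (-(3 * β ^ 2) / (8 * α * δ)) + β * (1 / (2 * δ) + B / 2)
        + α * A / 2 = v δ - (-k / δ + s δ) * (s δ - p) := by
      have e : 3 * α / (2 * β) * (-(3 * β ^ 2) / (8 * α * δ)) + β * (1 / (2 * δ) + B / 2)
        + α * A / 2 = (-(β / 16) + c₁ * δ) / δ := by
        rw [hc₁]; field_simp; ring
      rw [e, hr, div_eq_iff hδ0.ne']
      apply mul_right_cancel₀ hne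
      unfold stableEqn at h0
      have : (v δ - (δ * s δ - k) / δ * (s δ - p)) * δ =
        v δ * δ - (δ * s δ - k) * (s δ - p) := by field_simp
      rw [this]
      linear_combination h0 - δ * hvr
    have ec0 : α * (1 / (2 * δ) + B / 2) / 2 - α * A * (3 * α / (2 * β)) / 2 =
        -(-k / δ + s δ) * v δ := by
      have e : α * (1 / (2 * δ) + B / 2) / 2 - α * A * (3 * α / (2 * β)) / 2 =
          (α / 4 + c₀ * δ) / δ := by
        rw [hc₀, hpdef]; field_simp; ring
      rw [e, hr, div_eq_iff hδ0.ne']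
      have : -((δ * s δ - k) / δ) * v δ * δ = -(v δ * (δ * s δ - k)) := by field_simp
      rw [this, hvr, neg_neg]
    have hreal : ∀ x : ℝ, eval x (M δ).charpoly =
        (x - (-k / δ + s δ)) * (x ^ 2 + (s δ - p) * x + v δ) := by
      intro x
      have := charpoly_eval α β A (1 / (2 * δ) + B / 2) (3 * α / (2 * β))
        (-(3 * β ^ 2) / (8 * α * δ)) x
      rw [← hM δ, ec2, ec1, ec0, coe_aeval_eq_eval] at this
      rw [this]
      simp only [Algebra.algebraMap_self, RingHom.id_apply]
      ring
    have hcomplex : ∀ x : ℂ, aeval x (M δ).charpoly =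
        (x - ((-k / δ + s δ : ℝ) : ℂ)) * (x ^ 2 + ((s δ - p : ℝ) : ℂ) * x + ((v δ : ℝ) : ℂ)) := by
      intro x
      have := charpoly_eval α β A (1 / (2 * δ) + B / 2) (3 * α / (2 * β))
        (-(3 * β ^ 2) / (8 * α * δ)) x
      rw [← hM δ, ec2, ec1, ec0] at this
      rw [this]
      simp only [Complex.coe_algebraMap]
      push_cast
      ring
    have hsq : √(v δ - (s δ - p) ^ 2 / 4) ^ 2 = v δ - (s δ - p) ^ 2 / 4 := Real.sq_sqrt h3.le
    have hquad : ∀ y : ℝ, y ^ 2 = v δ - (s δ - p) ^ 2 / 4 →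
        aeval (⟨(p - s δ) / 2, y⟩ : ℂ) (M δ).charpoly = 0 := by
      intro y hy
      rw [hcomplex]
      apply mul_eq_zero_of_right
      apply Complex.ext
      · simp [pow_two]
        linear_combination -hy
      · simp [pow_two]
        ring
    refine ⟨?_, ?_, ?_, ?_, hquad _ hsq, ?_, ?_⟩
    · show -k / δ + s δ < 0
      rw [hr]
      exact div_neg_of_neg_of_pos (by linarith) hδ0
    · intro x
      rw [hreal, mul_eq_zero, sub_eq_zero]
      refine or_iff_left ?_
      nlinarith [sq_nonneg (x + (s δ - p) / 2)]
    · show 0 < (p - s δ) / 2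
      linarith
    · exact (Real.sqrt_pos.2 h3).ne'
    · exact hquad (-√(v δ - (s δ - p) ^ 2 / 4)) (by rw [neg_sq, hsq])
    · show -k / δ + s δ + (p - s δ) / 2 < 0
      have : -k / δ + s δ + (p - s δ) / 2 = (δ * ((s δ + p) / 2) - k) / δ := by
        field_simp; ring
      rw [this]
      exact div_neg_of_neg_of_pos (by linarith) hδ0
  · have hlim := (hs.add_const p).div_const 2
    have hval : (p - α / (6 * β) + p) / 2 = 17 * α / (12 * β) := by
      rw [hpdef]; field_simp; norm_num
    rw [hval] at hlim
    refine hlim.congr' ?_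
    filter_upwards [self_mem_nhdsWithin] with δ hδ
    have hδ0 : δ ≠ 0 := (Set.mem_Ioi.1 hδ).ne'
    have : 3 * β ^ 2 / (8 * α * δ) = k / δ := by rw [hkdef]; field_simp
    rw [this]
    ring
end

section
/- Let α > 0 and β > 0, and let φ : ℝ → ℝ be the clamp function φ(u) = max(−1, min(1, u)). For δ > 0 and A, B ∈ ℝ define the Lipschitz continuous vector field W^δ_{A,B}(x,y,z) = ((1 + φ(z/δ))/2)·X_{α,β}(x,y,z) + ((1 − φ(z/δ))/2)·Y_{α,β}(x,y,z) + δ·((1 + φ(z/δ))/2)·(0, 0, A·x + B·y) on ℝ³. Then there exists δ₀ > 0 such that for every δ ∈ (0, δ₀) there are parameters A_δ, B_δ ∈ ℝ, with A_δ → 40α/(9β²) and B_δ → −32α²/(3β³) as δ → 0⁺, for which W^δ_{A_δ,B_δ}(0,0,0) = (0,0,0) and W^δ_{A_δ,B_δ} admits a homoclinic orbit to the origin: there exists a nonconstant differentiable f : ℝ → ℝ³ with f'(t) = W^δ_{A_δ,B_δ}(f(t)) for all t ∈ ℝ and f(t) → (0,0,0) as t → +∞ and as t → −∞. -/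
/-!
A linear change of coordinates and time, together with the substitution
`Y = y + δ (A x + B y)`, reduces the claim to the case `α = β = 1` and to the vector field
`normalField`. With `z = δ w`, the strip `|w| ≤ 1` carries a slow–fast system whose slow part
involves `A` and `B` only through the small numbers `a₁ = δ (A + B)`, `a₂ = δ (3 A - B) / 2`,
`a₃ = δ (B + 3 A) / 2`. Its critical manifold is `w = Y / (3/4 - Y)`, that is, `defect Y w = 0`.
The homoclinic orbit consists of three pieces.

* The stable branch leaves the level `z = δ` downwards and tends to the origin inside the strip. It is
  a graph over `w ∈ [0, 1]`, of the form `x = δ w p(w)`, `Y = δ w q(w)`.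
* The outer arc above the strip, where the field is polynomial and can be integrated explicitly,
  runs from `(3/2, 3/8 + δ c, δ)` to the starting point of the stable branch.
* The unstable branch tends to the origin in backward time and stays in the strip until it
  reaches `(3/2, 3/8 + δ c, δ)`.

For given `c` near `8/3` and small `δ`, the stable branch and the parameters `(A, B)` that make the
outer arc end at its starting point solve one fixed-point equation `U = base c + δ • corr U`, so the
implicit function theorem applies (`exists_stableData`); at `δ = 0` it gives
`A = 4/3 (c + 2/3)` and `B = 8/3 (-c - 4/3)`, hence `40/9` and `-32/3` for `c = 8/3`.

The remaining number `c` is found by shooting (`exists_unstable_branch`). In backward time the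
critical manifold is repelling, so a solution starting at `(3/2, 3/8 + δ c, δ)` leaves the thin
conical tube `|defect| ≤ θ ‖(x, Y)‖` transversally if it reaches the boundary. The values of `c` for
which it leaves through the upper and through the lower side form disjoint open sets, which
contain `8/3 - ε` and `8/3 + ε` respectively. By connectedness some `c ∈ [8/3 - ε, 8/3 + ε]` belongs
to neither; its solution stays in the tube forever, and the strict Lyapunov function `lyap` of the slow
flow forces it to converge to the origin.

As `ε` is arbitrary, admissible pairs `(A, B)` exist arbitrarily close to `(40/9, -32/3)` for
small `δ`, and for each `δ` a pair almost as close as possible is selected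
(`exists_tendsto_selection`).
-/
open Set Filter Topology
open scoped NNReal

/-! ### Global flows of bounded Lipschitz fields -/

/-- Solutions on the intervals `(-(n + 1), n + 1)` exist by Picard–Lindelöf, since the field is bounded
and Lipschitz on the whole space; by uniqueness they agree with each other. -/
theorem exists_global_solution {E : Type*} [NormedAddCommGroup E] [NormedSpace ℝ E]
    [CompleteSpace E] {F : E → E} {K L : ℝ≥0} (hF : LipschitzWith K F) (hL : ∀ p, ‖F p‖ ≤ L)
    (p : E) : ∃ g : ℝ → E, g 0 = p ∧ ∀ t, HasDerivAt g (F (g t)) t := by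
  have key : ∀ n : ℕ, ∃ g : ℝ → E, g 0 = p ∧
      ∀ t ∈ Ioo (-((n : ℝ) + 1)) ((n : ℝ) + 1), HasDerivAt g (F (g t)) t := by
    intro n
    have hn : (0 : ℝ) ≤ (n : ℝ) + 1 := by positivity
    have h0 : (0 : ℝ) ∈ Icc (-((n : ℝ) + 1)) ((n : ℝ) + 1) := ⟨by linarith, hn⟩
    have hpl : IsPicardLindelof (fun _ : ℝ => F) (⟨0, h0⟩ : Icc (-((n : ℝ) + 1)) ((n : ℝ) + 1))
        p (L * ((n : ℝ≥0) + 1)) 0 L K :=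
      { lipschitzOnWith := fun t _ => hF.lipschitzOnWith
        continuousOn := fun x _ => continuousOn_const
        norm_le := fun t _ x _ => hL x
        mul_max_le := by simp }
    obtain ⟨g, hg0, hg⟩ := hpl.exists_eq_forall_mem_Icc_hasDerivWithinAt₀
    exact ⟨g, hg0, fun t ht => (hg t (Ioo_subset_Icc_self ht)).hasDerivAt
      (Icc_mem_nhds ht.1 ht.2)⟩
  choose g hg0 hg using key
  have agree : ∀ m n : ℕ, m ≤ n → ∀ t ∈ Ioo (-((m : ℝ) + 1)) ((m : ℝ) + 1), g m t = g n t := by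
    intro m n hmn t ht
    have hmn' : (m : ℝ) ≤ n := by exact_mod_cast hmn
    have hm : (0 : ℝ) ≤ m := by positivity
    refine ODE_solution_unique_of_mem_Ioo (v := fun _ => F) (s := fun _ => univ) (K := K)
      (t₀ := 0) (fun t _ => hF.lipschitzOnWith) (by constructor <;> linarith)
      (fun s hs => ⟨hg m s hs, trivial⟩)
      (fun s hs => ⟨hg n s ⟨by linarith [hs.1], by linarith [hs.2]⟩, trivial⟩)
      (by rw [hg0, hg0]) ht
  refine ⟨fun t => g ⌈|t|⌉₊ t, by simp [hg0], fun t => ?_⟩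
  set N := ⌈|t|⌉₊ + 1 with hN
  have htN : |t| < N := by
    have := Nat.le_ceil |t|
    push_cast [hN]; linarith
  have ev : (fun s => g ⌈|s|⌉₊ s) =ᶠ[𝓝 t] g N := by
    have : ∀ᶠ s in 𝓝 t, |s| < (N : ℝ) := (continuous_abs.tendsto t).eventually (gt_mem_nhds htN)
    filter_upwards [this] with s hs
    refine agree _ _ (Nat.ceil_le.2 hs.le) s ?_
    have := Nat.le_ceil |s|
    exact abs_lt.1 (by linarith)
  have ht' : t ∈ Ioo (-((N : ℝ) + 1)) ((N : ℝ) + 1) := abs_lt.1 (by linarith)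
  have h1 := (hg N t ht').congr_of_eventuallyEq ev
  rwa [← ev.self_of_nhds] at h1

/-- Joint continuity of the forward flow comes from the Grönwall estimate
`dist (Φ p t) (Φ q t) ≤ dist p q * exp (K t)`. -/
theorem exists_flow {E : Type*} [NormedAddCommGroup E] [NormedSpace ℝ E]
    [CompleteSpace E] {F : E → E} {K L : ℝ≥0} (hF : LipschitzWith K F) (hL : ∀ p, ‖F p‖ ≤ L) :
    ∃ Φ : E → ℝ → E, (∀ p, Φ p 0 = p) ∧ (∀ p t, HasDerivAt (Φ p) (F (Φ p t)) t) ∧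
      ContinuousOn (fun z : E × ℝ => Φ z.1 z.2) (univ ×ˢ Ici 0) := by
  choose Φ h0 hd using fun p => exists_global_solution hF hL p
  refine ⟨Φ, h0, hd, ?_⟩
  have hc : ∀ p, Continuous (Φ p) := fun p =>
    continuous_iff_continuousAt.2 fun t => (hd p t).continuousAt
  have hdist : ∀ p q t, 0 ≤ t → dist (Φ p t) (Φ q t) ≤ dist p q * Real.exp (K * t) := by
    intro p q t ht
    have := dist_le_of_trajectories_ODE (v := fun _ => F) (K := K) (a := 0) (b := t)
      (δ := dist p q) (fun _ => hF) (hc p).continuousOn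
      (fun s _ => (hd p s).hasDerivWithinAt) (hc q).continuousOn
      (fun s _ => (hd q s).hasDerivWithinAt) (by rw [h0, h0]) t ⟨ht, le_rfl⟩
    simpa using this
  rintro ⟨p, t⟩ -
  have h1 : Tendsto (fun z : E × ℝ => dist z.1 p * Real.exp (K * z.2) + dist (Φ p z.2) (Φ p t))
      (𝓝[univ ×ˢ Ici 0] (p, t)) (𝓝 0) := by
    have : Continuous fun z : E × ℝ =>
        dist z.1 p * Real.exp (K * z.2) + dist (Φ p z.2) (Φ p t) := by
      have := (hc p).comp (continuous_snd (X := E))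
      fun_prop
    refine (this.tendsto' (p, t) 0 (by simp)).mono_left nhdsWithin_le_nhds
  refine tendsto_iff_dist_tendsto_zero.2 (squeeze_zero' (Eventually.of_forall fun _ => dist_nonneg)
    ?_ h1)
  filter_upwards [self_mem_nhdsWithin] with z hz
  exact (dist_triangle _ (Φ p z.2) _).trans (add_le_add (hdist _ _ _ hz.2) le_rfl)

/-- Truncation of a real number to `[-5, 5]`. -/
noncomputable def cl (u : ℝ) : ℝ := max (-5) (min 5 u)

theorem cl_eq {u : ℝ} (h : |u| ≤ 5) : cl u = u := by
  rw [abs_le] at h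
  unfold cl; rw [min_eq_right h.2, max_eq_right h.1]

theorem abs_cl (u : ℝ) : |cl u| ≤ 5 := by
  unfold cl; rw [abs_le]; constructor
  · exact le_max_left _ _
  · exact max_le (by norm_num) (min_le_left _ _)

/-- Coordinatewise truncation, a retraction of `ℝⁿ` onto the cube `[-5, 5]ⁿ`. -/
noncomputable def clv {n : ℕ} (p : Fin n → ℝ) : Fin n → ℝ := fun i => cl (p i)

theorem lipschitz_clv {n : ℕ} : LipschitzWith 1 (clv : (Fin n → ℝ) → Fin n → ℝ) := by
  refine LipschitzWith.of_dist_le_mul fun p q => ?_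
  simp only [NNReal.coe_one, one_mul]
  refine (dist_pi_le_iff dist_nonneg).2 fun i => (le_trans ?_ (dist_le_pi_dist p q i))
  have : LipschitzWith 1 (fun u : ℝ => max (-5) (min 5 u)) :=
    (LipschitzWith.id.const_min 5).const_max (-5)
  simpa using! this.dist_le_mul (p i) (q i)

/-- Truncating the argument of a `C¹` field makes it globally Lipschitz and bounded without changing it on
the cube `[-5, 5]ⁿ`, so it has a global flow. -/
theorem exists_clamped_flow {n : ℕ} {P : (Fin n → ℝ) → Fin n → ℝ} (hP : ContDiff ℝ 1 P) :
    ∃ (K : ℝ≥0) (Φ : (Fin n → ℝ) → ℝ → Fin n → ℝ), LipschitzWith K (fun p => P (clv p)) ∧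
      (∀ p, Φ p 0 = p) ∧ (∀ p t, HasDerivAt (Φ p) (P (clv (Φ p t))) t) ∧
      ContinuousOn (fun z : (Fin n → ℝ) × ℝ => Φ z.1 z.2) (univ ×ˢ Ici 0) := by
  set S : Set (Fin n → ℝ) := Icc (fun _ => -5) (fun _ => 5) with hS
  have hSc : IsCompact S := isCompact_Icc
  have hmem : ∀ p : Fin n → ℝ, clv p ∈ S := fun p =>
    ⟨fun i => (abs_le.1 (abs_cl (p i))).1, fun i => (abs_le.1 (abs_cl (p i))).2⟩
  obtain ⟨K, hK⟩ := (hP.locallyLipschitz.locallyLipschitzOn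
    (s := S)).exists_lipschitzOnWith_of_compact hSc
  obtain ⟨L, hL⟩ := hSc.exists_bound_of_continuousOn hP.continuous.continuousOn
  have hlip : LipschitzWith K (fun p => P (clv p)) := by
    have := hK.comp (lipschitz_clv (n := n)).lipschitzOnWith (s := univ) (fun p _ => hmem p)
    simpa [lipschitzOnWith_univ, Function.comp_def] using this
  have hbd : ∀ p, ‖P (clv p)‖ ≤ (L.toNNReal : ℝ≥0) := fun p =>
    (hL _ (hmem p)).trans (Real.le_coe_toNNReal L)
  obtain ⟨Φ, h0, hd, hc⟩ := exists_flow hlip hbd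
  exact ⟨K, Φ, hlip, h0, hd, hc⟩

/-! ### Estimates for the strip field in backward time -/

/-- The `Y`-component of the backward strip field, in the coordinates `x`, `Y = y + δ (A x + B y)`,
`w = z / δ`. The other two components are `w` and `defect Y w / (2 δ)`. -/
noncomputable def fieldY (a₁ a₂ a₃ x Y w : ℝ) : ℝ :=
  (1 + a₁) * w - (1 / 2 - a₂) * x - 3 / 2 * Y - w * ((1 / 2 + a₃) * x - 3 / 2 * Y)

/-- The `w`-component of the backward strip field, multiplied by `2 δ`. Its zero set is the critical manifold
`w = Y / (3/4 - Y)`, and in general it measures the deviation from it. -/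
noncomputable def defect (Y w : ℝ) : ℝ := (3 / 4 - Y) * w - Y

/-- Euclidean norm of `(x, Y)`. -/
noncomputable def rad (x Y : ℝ) : ℝ := √(x ^ 2 + Y ^ 2)

theorem rad_nonneg (x Y : ℝ) : 0 ≤ rad x Y := Real.sqrt_nonneg _

theorem rad_sq (x Y : ℝ) : rad x Y ^ 2 = x ^ 2 + Y ^ 2 := Real.sq_sqrt (by positivity)

theorem abs_fst_le_rad (x Y : ℝ) : |x| ≤ rad x Y :=
  Real.abs_le_sqrt (by nlinarith [sq_nonneg Y])

theorem abs_snd_le_rad (x Y : ℝ) : |Y| ≤ rad x Y :=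
  Real.abs_le_sqrt (by nlinarith [sq_nonneg x])

/-- Lyapunov function of the backward slow flow on the critical manifold. In `Region` its minimum is
`-1/48`, attained at the origin. The factor `exp (-6 x)` compensates the term `3 Y²` of the slow field, and the
term `x Y / 24` makes the decrease strict. -/
noncomputable def lyap (x Y : ℝ) : ℝ :=
  Real.exp (-6 * x) * (Y ^ 2 - x / 8 - 1 / 48 + x * Y / 24)

/-- A bounded region of the `(x, Y)`-plane that contains the trajectories in the tube and in which the
estimates below hold. The last condition says that `lyap` is negative. -/
structure Region (x Y : ℝ) : Prop where
  x_gt : -19 / 100 < x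
  x_lt : x < 2
  Y_gt : -3 / 5 < Y
  Y_lt : Y < 3 / 5
  G_neg : Y ^ 2 + x * Y / 24 < x / 8 + 1 / 48

theorem abs_mul_le_mul {a b A B : ℝ} (ha : |a| ≤ A) (hb : |b| ≤ B) : |a * b| ≤ A * B := by
  rw [abs_mul]
  exact mul_le_mul ha hb (abs_nonneg _) ((abs_nonneg _).trans ha)

/-- The part `x ≥ -1/5` of a sublevel set of `lyap` lies in the region. The level is slightly above the value at
`(3/2, 3/8)`, where the backward trajectories start. -/
theorem region_of_lyap {x Y : ℝ} (hV : lyap x Y ≤ -(1 / 25) * Real.exp (-9)) (hx : -1 / 5 ≤ x) :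
    Region x Y := by
  have e1 : Real.exp (-6 * x) * Real.exp (6 * x) = 1 := by rw [← Real.exp_add]; simp
  have e2 : Real.exp (-9) * Real.exp (6 * x) = Real.exp (6 * x - 9) := by
    rw [← Real.exp_add]; ring_nf
  have hG : Y ^ 2 - x / 8 - 1 / 48 + x * Y / 24 ≤ -(1 / 25) * Real.exp (6 * x - 9) := by
    have := mul_le_mul_of_nonneg_right hV (Real.exp_pos (6 * x)).le
    unfold lyap at this
    calc _ = Real.exp (-6 * x) * Real.exp (6 * x) * (Y ^ 2 - x / 8 - 1 / 48 + x * Y / 24) := by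
          rw [e1]; ring
      _ ≤ -(1 / 25) * (Real.exp (-9) * Real.exp (6 * x)) := by linarith
      _ = _ := by rw [e2]
  have hE := Real.exp_pos (6 * x - 9)
  have hx2 : x < 2 := by
    by_contra! h
    have := Real.quadratic_le_exp_of_nonneg (x := 6 * x - 9) (by linarith)
    nlinarith [sq_nonneg (Y + x / 48), sq_nonneg (x - 2)]
  have hx1 : -19 / 100 < x := by
    by_contra! h
    nlinarith [sq_nonneg (Y + x / 48)]
  have hY : |Y| < 3 / 5 := by
    by_contra! h
    have h2 : |x * Y| ≤ 2 * |Y| := by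
      rw [abs_mul]
      exact mul_le_mul_of_nonneg_right (abs_le.2 ⟨by linarith, by linarith⟩) (abs_nonneg _)
    have := neg_abs_le (x * Y)
    nlinarith [sq_abs Y]
  exact ⟨hx1, hx2, by linarith [(abs_lt.1 hY).1], (abs_lt.1 hY).2, by linarith⟩

section Algebra

variable {x Y w θ a₁ a₂ a₃ : ℝ}

theorem rad_le (hR : Region x Y) : rad x Y ≤ 11 / 5 := by
  obtain ⟨h1, h2, h3, h4, -⟩ := hR
  unfold rad
  rw [Real.sqrt_le_left (by norm_num)]
  nlinarith

theorem w_mul (Y w : ℝ) : (3 / 4 - Y) * w = Y + defect Y w := by unfold defect; ring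

theorem D_fieldY (x Y w : ℝ) : (3 / 4 - Y) * fieldY a₁ a₂ a₃ x Y w =
    (-(3 / 8) * x - Y / 8 + 3 * Y ^ 2) + (defect Y w * (1 - x / 2 + 3 / 2 * Y)
      + (Y + defect Y w) * (a₁ - a₃ * x) + (3 / 4 - Y) * (a₂ * x)) := by
  unfold fieldY defect; ring

theorem abs_w_le (hR : Region x Y) (hθ : θ ≤ 1 / 10000)
    (hm : |defect Y w| ≤ θ * rad x Y) : |w| ≤ 8 * rad x Y ∧ |w| < 5 := by
  have hD : 3 / 20 ≤ 3 / 4 - Y := by linarith [hR.Y_lt]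
  have h0 : (3 / 4 - Y) * |w| = |Y + defect Y w| := by
    rw [← w_mul, abs_mul, abs_of_pos (show 0 < 3 / 4 - Y by linarith)]
  have h1 := abs_add_le Y (defect Y w)
  have h2 := abs_snd_le_rad x Y
  have h3 := rad_le hR
  have h4 := rad_nonneg x Y
  have h5 : |Y| ≤ 3 / 5 := abs_le.2 ⟨by linarith [hR.Y_gt], hR.Y_lt.le⟩
  have h6 := abs_nonneg w
  have h7 : 3 / 20 * |w| ≤ (3 / 4 - Y) * |w| := by gcongr
  constructor <;> nlinarith

/-- In the tube `fieldY` is a small relative perturbation of the slow field on the critical manifold. -/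
theorem abs_fieldY_sub_le (hR : Region x Y) (hθ : θ ≤ 1 / 10000)
    (ha₁ : |a₁| ≤ θ) (ha₂ : |a₂| ≤ θ) (ha₃ : |a₃| ≤ θ)
    (hm : |defect Y w| ≤ θ * rad x Y) :
    |(3 / 4 - Y) * fieldY a₁ a₂ a₃ x Y w - (-(3 / 8) * x - Y / 8 + 3 * Y ^ 2)|
      ≤ 10 * θ * rad x Y := by
  obtain ⟨h1, h2, h3, h4, -⟩ := hR
  have hx := abs_fst_le_rad x Y
  have hY := abs_snd_le_rad x Y
  have h0 := rad_nonneg x Y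
  have hθ0 : 0 ≤ θ := (abs_nonneg _).trans ha₁
  rw [D_fieldY]
  have b1 := abs_mul_le_mul hm
    (show |1 - x / 2 + 3 / 2 * Y| ≤ 2 from abs_le.2 ⟨by linarith, by linarith⟩)
  have c1 : |Y + defect Y w| ≤ 2 * rad x Y := by
    refine (abs_add_le _ _).trans ?_
    nlinarith
  have c2 : |a₁ - a₃ * x| ≤ 3 * θ := by
    have := abs_mul_le_mul ha₃ (show |x| ≤ 2 from abs_le.2 ⟨by linarith, by linarith⟩)
    have := abs_sub a₁ (a₃ * x)
    linarith
  have b2 := abs_mul_le_mul c1 c2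
  have b3 := abs_mul_le_mul (show |3 / 4 - Y| ≤ 27 / 20 from abs_le.2 ⟨by linarith, by linarith⟩)
    (abs_mul_le_mul ha₂ hx)
  have t1 := abs_add_le (defect Y w * (1 - x / 2 + 3 / 2 * Y)
    + (Y + defect Y w) * (a₁ - a₃ * x)) ((3 / 4 - Y) * (a₂ * x))
  have t2 := abs_add_le (defect Y w * (1 - x / 2 + 3 / 2 * Y))
    ((Y + defect Y w) * (a₁ - a₃ * x))
  have e : ∀ u v : ℝ, u + v - u = v := fun u v => by ring
  rw [e]
  have : 0 ≤ θ * rad x Y := by positivity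
  linarith

theorem abs_fieldY_le (hR : Region x Y) (hθ : θ ≤ 1 / 10000)
    (ha₁ : |a₁| ≤ θ) (ha₂ : |a₂| ≤ θ) (ha₃ : |a₃| ≤ θ)
    (hm : |defect Y w| ≤ θ * rad x Y) : |fieldY a₁ a₂ a₃ x Y w| ≤ 20 * rad x Y := by
  have h := abs_fieldY_sub_le hR hθ ha₁ ha₂ ha₃ hm
  obtain ⟨h1, h2, h3, h4, -⟩ := hR
  have hx := abs_fst_le_rad x Y
  have hY := abs_snd_le_rad x Y
  have h0 := rad_nonneg x Y
  have b : |-(3 / 8) * x - Y / 8 + 3 * Y ^ 2| ≤ 5 / 2 * rad x Y := by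
    have e : -(3 / 8) * x - Y / 8 + 3 * Y ^ 2 = -(3 / 8) * x + (-(1 / 8) + 3 * Y) * Y := by ring
    rw [e]
    have b1 := abs_mul_le_mul (show |-(3 / 8 : ℝ)| ≤ 3 / 8 by norm_num) hx
    have b2 := abs_mul_le_mul (show |-(1 / 8) + 3 * Y| ≤ 2 from
      abs_le.2 ⟨by linarith, by linarith⟩) hY
    have := abs_add_le (-(3 / 8) * x) ((-(1 / 8) + 3 * Y) * Y)
    linarith
  have t := abs_sub_abs_le_abs_sub ((3 / 4 - Y) * fieldY a₁ a₂ a₃ x Y w)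
    (-(3 / 8) * x - Y / 8 + 3 * Y ^ 2)
  rw [abs_mul, abs_of_pos (show 0 < 3 / 4 - Y by linarith)] at t
  have : 3 / 20 * |fieldY a₁ a₂ a₃ x Y w| ≤ (3 / 4 - Y) * |fieldY a₁ a₂ a₃ x Y w| := by
    gcongr; linarith
  nlinarith

/-- Derivative of `lyap` along the backward strip field. -/
noncomputable def lyapDot (a₁ a₂ a₃ x Y w : ℝ) : ℝ :=
  Real.exp (-6 * x) * (-6 * w) * (Y ^ 2 - x / 8 - 1 / 48 + x * Y / 24)
   + Real.exp (-6 * x) * (2 * Y * fieldY a₁ a₂ a₃ x Y w - w / 8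
      + (w * Y + x * fieldY a₁ a₂ a₃ x Y w) / 24)

set_option maxHeartbeats 1000000 in
theorem lyapDot_le (hR : Region x Y) (hθ : θ ≤ 1 / 10000)
    (ha₁ : |a₁| ≤ θ) (ha₂ : |a₂| ≤ θ) (ha₃ : |a₃| ≤ θ)
    (hm : |defect Y w| ≤ θ * rad x Y) :
    lyapDot a₁ a₂ a₃ x Y w ≤ -(1 / 1000) * Real.exp (-12) * rad x Y ^ 2 := by
  have h := abs_fieldY_sub_le hR hθ ha₁ ha₂ ha₃ hm
  obtain ⟨h1, h2, h3, h4, -⟩ := hR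
  have hx := abs_fst_le_rad x Y
  have hY := abs_snd_le_rad x Y
  have h0 := rad_nonneg x Y
  have hsq := rad_sq x Y
  have hθ0 : 0 ≤ θ := (abs_nonneg _).trans ha₁
  set r := rad x Y
  set E := (3 / 4 - Y) * fieldY a₁ a₂ a₃ x Y w - (-(3 / 8) * x - Y / 8 + 3 * Y ^ 2) with hE
  set m := defect Y w with hmdef
  have key : (3 / 4 - Y) * lyapDot a₁ a₂ a₃ x Y w = Real.exp (-6 * x) *
      ((-Y ^ 2 / 4 + (Y ^ 2 - 3 * x * Y ^ 2 - 3 / 8 * x ^ 2 - x * Y / 8) / 24)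
        + m * ((-6 * Y + 1 / 24 - x / 4) * Y + 3 / 4 * x) + (2 * Y + x / 24) * E) := by
    simp only [lyapDot, hE, hmdef, defect]; ring
  have b1 : |m * ((-6 * Y + 1 / 24 - x / 4) * Y + 3 / 4 * x)| ≤ (θ * r) * (6 * r) := by
    refine abs_mul_le_mul hm ?_
    have b1 := abs_mul_le_mul (show |-6 * Y + 1 / 24 - x / 4| ≤ 5 from
      abs_le.2 ⟨by linarith, by linarith⟩) hY
    have b2 := abs_mul_le_mul (show |(3 / 4 : ℝ)| ≤ 3 / 4 by rw [abs_of_pos]; norm_num) hx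
    have := abs_add_le ((-6 * Y + 1 / 24 - x / 4) * Y) (3 / 4 * x)
    linarith
  have b2 : |(2 * Y + x / 24) * E| ≤ (3 * r) * (10 * θ * r) := by
    refine abs_mul_le_mul ?_ h
    rw [abs_le] at hx hY ⊢
    constructor <;> linarith
  have b3 : -Y ^ 2 / 4 + (Y ^ 2 - 3 * x * Y ^ 2 - 3 / 8 * x ^ 2 - x * Y / 8) / 24
      ≤ -(1 / 100) * r ^ 2 := by
    rw [hsq]
    nlinarith [sq_nonneg (x + Y), sq_nonneg (x - Y), mul_nonneg (show 0 ≤ x + 19 / 100 by linarith) (sq_nonneg Y)]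
  have b4 : θ * r ^ 2 ≤ 1 / 10000 * r ^ 2 := by gcongr
  have b5 : (-Y ^ 2 / 4 + (Y ^ 2 - 3 * x * Y ^ 2 - 3 / 8 * x ^ 2 - x * Y / 8) / 24)
        + m * ((-6 * Y + 1 / 24 - x / 4) * Y + 3 / 4 * x) + (2 * Y + x / 24) * E
      ≤ -(1 / 200) * r ^ 2 := by
    have := (abs_le.1 b1).2
    have := (abs_le.1 b2).2
    linarith [sq_nonneg r]
  have b6 : Real.exp (-12) ≤ Real.exp (-6 * x) := Real.exp_le_exp.2 (by linarith)
  have b7 : (3 / 4 - Y) * lyapDot a₁ a₂ a₃ x Y w ≤ -(1 / 200) * Real.exp (-12) * r ^ 2 := by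
    rw [key]
    calc _ ≤ Real.exp (-6 * x) * (-(1 / 200) * r ^ 2) :=
          mul_le_mul_of_nonneg_left b5 (Real.exp_pos _).le
      _ ≤ _ := by nlinarith [mul_le_mul_of_nonneg_right b6 (sq_nonneg r)]
  by_contra! hc
  have hp : 0 ≤ Real.exp (-12) * r ^ 2 := by positivity
  have b8 := mul_lt_mul_of_pos_left hc (show 0 < 3 / 4 - Y by linarith)
  have b9 := mul_nonneg (show 0 ≤ 3 / 5 + Y by linarith) hp
  linarith

theorem lyap_lower (hR : Region x Y) : Real.exp (-12) / 10 * rad x Y ^ 2 ≤ lyap x Y + 1 / 48 := by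
  obtain ⟨h1, h2, h3, h4, -⟩ := hR
  rw [rad_sq]
  have e1 : Real.exp (-6 * x) * Real.exp (6 * x) = 1 := by rw [← Real.exp_add]; simp
  have h5 : lyap x Y + 1 / 48 = Real.exp (-6 * x) *
      (Y ^ 2 + x * Y / 24 + (Real.exp (6 * x) - 1 - 6 * x) / 48) := by
    unfold lyap; linear_combination -(1 / 48) * e1
  have h6 : 1 + 6 * x + (6 * x) ^ 2 / 4 ≤ Real.exp (6 * x) := by
    have e : Real.exp (6 * x) = Real.exp (6 * x / 4) ^ 4 := by
      rw [← Real.exp_nat_mul]; congr 1; push_cast; ring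
    have l := Real.add_one_le_exp (6 * x / 4)
    have l2 : 0 ≤ 6 * x / 4 + 1 := by linarith
    rw [e]
    have := pow_le_pow_left₀ l2 l 4
    nlinarith [mul_nonneg l2 (sq_nonneg x), sq_nonneg (x ^ 2), mul_nonneg (show 0 ≤ x + 1 / 5 by linarith) (sq_nonneg x)]
  rw [h5]
  have b6 : Real.exp (-12) ≤ Real.exp (-6 * x) := Real.exp_le_exp.2 (by linarith)
  have h7 : (x ^ 2 + Y ^ 2) / 10 ≤ Y ^ 2 + x * Y / 24 + (Real.exp (6 * x) - 1 - 6 * x) / 48 := by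
    nlinarith [sq_nonneg (x + Y)]
  calc _ = Real.exp (-12) * ((x ^ 2 + Y ^ 2) / 10) := by ring
    _ ≤ _ := mul_le_mul b6 h7 (by positivity) (Real.exp_pos _).le

theorem lyap_upper (hR : Region x Y) : lyap x Y + 1 / 48 ≤ 20 * rad x Y ^ 2 := by
  obtain ⟨h1, h2, h3, h4, -⟩ := hR
  rw [rad_sq]
  have hE4 : Real.exp (-6 * x) ≤ 8 := by
    have : Real.exp (-6 * x) ≤ Real.exp 2 := Real.exp_le_exp.2 (by linarith)
    have e : Real.exp 2 = Real.exp 1 ^ 2 := by rw [← Real.exp_nat_mul]; norm_num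
    nlinarith [Real.exp_one_lt_d9, Real.exp_pos 1]
  have hp := Real.exp_pos (-6 * x)
  have h5 : lyap x Y + 1 / 48 = Real.exp (-6 * x) * (Y ^ 2 + x * Y / 24)
      + (1 - (1 + 6 * x) * Real.exp (-6 * x)) / 48 := by
    unfold lyap; ring
  have h6 : 1 - (1 + 6 * x) * Real.exp (-6 * x) ≤ 3 * (6 * x) ^ 2 := by
    rcases le_total (-1) (6 * x) with h | h
    · have := Real.add_one_le_exp (-6 * x)
      nlinarith [mul_le_mul_of_nonneg_left this (show 0 ≤ 1 + 6 * x by linarith)]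
    · nlinarith [mul_le_mul_of_nonneg_left hE4 (show 0 ≤ -(1 + 6 * x) by linarith)]
  have h7 : Real.exp (-6 * x) * (Y ^ 2 + x * Y / 24) ≤ 8 * (2 * (x ^ 2 + Y ^ 2)) :=
    (mul_le_mul_of_nonneg_left (show Y ^ 2 + x * Y / 24 ≤ 2 * (x ^ 2 + Y ^ 2) by
      nlinarith [sq_nonneg (x - Y)]) hp.le).trans
      (mul_le_mul_of_nonneg_right hE4 (by positivity))
  rw [h5]
  nlinarith

/-- The quantity shown to be positive is the derivative of `defect ^ 2 - θ ^ 2 * rad ^ 2` along the field: on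
the boundary of the tube the fast term, of size `1 / δ`, dominates, so the flow leaves the tube. -/
theorem tube_exit_algebra {δ : ℝ} (hR : Region x Y) (hθ : θ ≤ 1 / 10000) (hθ0 : 0 < θ)
    (hδ : 0 < δ) (hδθ : δ ≤ θ / 10000)
    (ha₁ : |a₁| ≤ θ) (ha₂ : |a₂| ≤ θ) (ha₃ : |a₃| ≤ θ)
    (hm : |defect Y w| = θ * rad x Y) (hr : 0 < rad x Y) :
    0 < 2 * defect Y w * ((3 / 4 - Y) * (defect Y w / (2 * δ)) - (1 + w) * fieldY a₁ a₂ a₃ x Y w)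
      - θ ^ 2 * (2 * x * w + 2 * Y * fieldY a₁ a₂ a₃ x Y w) := by
  obtain ⟨hw, hw5⟩ := abs_w_le hR hθ hm.le
  have hf := abs_fieldY_le hR hθ ha₁ ha₂ ha₃ hm.le
  have hx := abs_fst_le_rad x Y
  have hY := abs_snd_le_rad x Y
  have hD : 3 / 20 ≤ 3 / 4 - Y := by linarith [hR.Y_lt]
  set r := rad x Y
  set m := defect Y w
  set f := fieldY a₁ a₂ a₃ x Y w
  have b1 : |m * ((1 + w) * f)| ≤ (θ * r) * (6 * (20 * r)) := by
    refine abs_mul_le_mul hm.le (abs_mul_le_mul ?_ hf)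
    have := abs_add_le 1 w
    rw [abs_one] at this; linarith
  have b2 : |x * w| ≤ r * (8 * r) := abs_mul_le_mul hx hw
  have b3 : |Y * f| ≤ r * (20 * r) := abs_mul_le_mul hY hf
  have hm2 : m ^ 2 = θ ^ 2 * r ^ 2 := by rw [← sq_abs, hm]; ring
  have e : 2 * m * ((3 / 4 - Y) * (m / (2 * δ)) - (1 + w) * f) - θ ^ 2 * (2 * x * w + 2 * Y * f)
      = (3 / 4 - Y) * (θ ^ 2 * r ^ 2 / δ) - 2 * (m * ((1 + w) * f))
        - 2 * θ ^ 2 * (x * w + Y * f) := by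
    rw [← hm2]; field_simp
  rw [e]
  have hp : 0 < θ * r ^ 2 := by positivity
  have b4 : 10000 * (θ * r ^ 2) ≤ θ ^ 2 * r ^ 2 / δ := by
    rw [le_div_iff₀ hδ]
    nlinarith [mul_le_mul_of_nonneg_left hδθ hp.le]
  have b5 : 3 / 20 * (10000 * (θ * r ^ 2)) ≤ (3 / 4 - Y) * (θ ^ 2 * r ^ 2 / δ) :=
    mul_le_mul hD b4 (by positivity) (by linarith)
  have b6 : θ ^ 2 * (x * w + Y * f) ≤ θ ^ 2 * (28 * r ^ 2) := by
    gcongr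
    linarith [(abs_le.1 b2).2, (abs_le.1 b3).2]
  have b7 : θ * (θ * r ^ 2) ≤ 1 / 10000 * (θ * r ^ 2) := by gcongr
  have := (abs_le.1 b1).2
  nlinarith

theorem one_add_w_mul (x Y w : ℝ) : (3 / 4 - Y) ^ 2 * (-(1 + w) * fieldY a₁ a₂ a₃ x Y w) =
    -(3 / 4 + defect Y w) * ((3 / 4 - Y) * fieldY a₁ a₂ a₃ x Y w) := by
  unfold defect; ring

/-- The limit value `1` is that of `-(1 + w) * fieldY` at `x = 3/2`, `Y = 3/8`, `w = 1` with `aᵢ = 0`. This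
term drives the equation for `defect`. -/
theorem near_start_algebra {η : ℝ} (hR : Region x Y) (hη : η ≤ 1 / 1000) (hθη : θ ≤ η / 100)
    (ha₁ : |a₁| ≤ θ) (ha₂ : |a₂| ≤ θ) (ha₃ : |a₃| ≤ θ)
    (hm : |defect Y w| ≤ θ * rad x Y) (hx : |x - 3 / 2| ≤ η) (hY : |Y - 3 / 8| ≤ η) :
    |-(1 + w) * fieldY a₁ a₂ a₃ x Y w - 1| ≤ 40 * η := by
  have h := abs_fieldY_sub_le hR (by linarith) ha₁ ha₂ ha₃ hm
  have hr := rad_le hR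
  have hr0 := rad_nonneg x Y
  have hθ0 : 0 ≤ θ := (abs_nonneg _).trans ha₁
  have hE := one_add_w_mul (a₁ := a₁) (a₂ := a₂) (a₃ := a₃) x Y w
  set r := rad x Y
  set m := defect Y w
  set E := -(1 + w) * fieldY a₁ a₂ a₃ x Y w
  set g := (3 / 4 - Y) * fieldY a₁ a₂ a₃ x Y w
  have hθr : θ * r ≤ η / 100 * (11 / 5) := mul_le_mul hθη hr hr0 (by linarith)
  have hY' := abs_le.1 hY
  have hx' := abs_le.1 hx
  have b0 := abs_mul_le_mul hY (show |Y + 3 / 8| ≤ 1 from abs_le.2 ⟨by linarith, by linarith⟩)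
  have b1 : |g + 3 / 16| ≤ 4 * η := by
    have h' := abs_le.1 h
    have b0' := abs_le.1 b0
    rw [abs_le]
    constructor <;> nlinarith
  have b2 := abs_mul_le_mul (hm.trans hθr) (show |g| ≤ 1 by
    have := abs_le.1 b1; exact abs_le.2 ⟨by linarith, by linarith⟩)
  have b3 : |(3 / 4 - Y) ^ 2 * E - (3 / 4 - Y) ^ 2| ≤ 5 * η := by
    have b1' := abs_le.1 b1
    have b2' := abs_le.1 b2
    have b4 := abs_le.1 (abs_mul_le_mul hY
      (show |9 / 8 - Y| ≤ 1 from abs_le.2 ⟨by linarith, by linarith⟩))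
    rw [hE, abs_le]
    constructor <;> nlinarith
  have b5 : |(3 / 4 - Y) ^ 2 * E - (3 / 4 - Y) ^ 2| = (3 / 4 - Y) ^ 2 * |E - 1| := by
    rw [← mul_sub_one, abs_mul, abs_of_nonneg (sq_nonneg _)]
  rw [b5] at b3
  have : 13 / 100 * |E - 1| ≤ (3 / 4 - Y) ^ 2 * |E - 1| := by
    gcongr; nlinarith
  linarith

/-- In the tube, the curve `Y² = x/16 + 3/64 + 1/1000` in `Y ≥ 0` cannot be crossed upwards. It lies just outside
`Y² = x/16 + 3/64`, which passes through `(3/2, 3/8)`. -/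
theorem barrier_algebra (hR : Region x Y) (hθ : θ ≤ 1 / 1000000)
    (ha₁ : |a₁| ≤ θ) (ha₂ : |a₂| ≤ θ) (ha₃ : |a₃| ≤ θ)
    (hm : |defect Y w| ≤ θ * rad x Y) (hY : 0 ≤ Y)
    (hG : Y ^ 2 - x / 16 - 3 / 64 - 1 / 1000 = 0) :
    2 * Y * fieldY a₁ a₂ a₃ x Y w - w / 16 < 0 := by
  have h := (abs_le.1 (abs_fieldY_sub_le hR (by linarith) ha₁ ha₂ ha₃ hm)).2
  have hr := rad_le hR
  have hr0 := rad_nonneg x Y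
  have hθ0 : 0 ≤ θ := (abs_nonneg _).trans ha₁
  have hθr : θ * rad x Y ≤ 1 / 1000000 * (11 / 5) := mul_le_mul hθ hr hr0 (by norm_num)
  have hm' := (abs_le.1 (hm.trans hθr)).1
  obtain ⟨h1, h2, h3, h4, h5⟩ := hR
  have hxe : x = 16 * Y ^ 2 - 3 / 4 - 16 / 1000 := by linarith
  have hx : 0 < x := by
    by_contra! hx
    nlinarith [mul_nonneg (neg_nonneg.2 hx) (show 0 ≤ 3 / 5 - Y by linarith)]
  have hx4 : 2 / 5 < x := by
    nlinarith [mul_nonneg hx.le hY]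
  have hY2 : 26 / 100 < Y := by nlinarith
  have hx5 : 51 / 100 < x := by
    nlinarith [mul_nonneg hx.le (show 0 ≤ Y - 26 / 100 by linarith)]
  have hY3 : 28 / 100 < Y := by nlinarith
  have e : (3 / 4 - Y) * (2 * Y * fieldY a₁ a₂ a₃ x Y w - w / 16)
      = 2 * Y * ((3 / 4 - Y) * fieldY a₁ a₂ a₃ x Y w) - (Y + defect Y w) / 16 := by
    rw [← w_mul]; ring
  have hneg : (3 / 4 - Y) * (2 * Y * fieldY a₁ a₂ a₃ x Y w - w / 16) < 0 := by
    rw [e]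
    have : (3 / 4 - Y) * fieldY a₁ a₂ a₃ x Y w
        ≤ -3 * Y ^ 2 - Y / 8 + 9 / 32 + 6 / 1000 + 1 / 10000 := by
      linarith
    have := mul_le_mul_of_nonneg_left this (show 0 ≤ 2 * Y by linarith)
    have h8 : -3 * Y ^ 2 - Y / 8 + 9 / 32 + 6 / 1000 + 1 / 10000 < 1 / 32 - 1 / 1000 := by nlinarith
    nlinarith
  by_contra! hc
  have := mul_nonneg (show 0 ≤ 3 / 4 - Y by linarith) hc
  linarith

/-- Below the barrier, and with `Y` bounded from below, the term driving `defect` is bounded away from zero. -/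
theorem zone_algebra (hR : Region x Y) (hθ : θ ≤ 1 / 1000000)
    (ha₁ : |a₁| ≤ θ) (ha₂ : |a₂| ≤ θ) (ha₃ : |a₃| ≤ θ)
    (hm : |defect Y w| ≤ θ * rad x Y) (hY : 33 / 100 ≤ Y)
    (hG : Y ^ 2 - x / 16 - 3 / 64 - 1 / 1000 < 0) :
    1 / 10 ≤ -(1 + w) * fieldY a₁ a₂ a₃ x Y w := by
  have h := (abs_le.1 (abs_fieldY_sub_le hR (by linarith) ha₁ ha₂ ha₃ hm)).2
  have hr := rad_le hR
  have hr0 := rad_nonneg x Y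
  have hθ0 : 0 ≤ θ := (abs_nonneg _).trans ha₁
  have hθr : θ * rad x Y ≤ 1 / 1000000 * (11 / 5) := mul_le_mul hθ hr hr0 (by norm_num)
  have hm' := (abs_le.1 (hm.trans hθr)).1
  obtain ⟨h1, h2, h3, h4, h5⟩ := hR
  have hE := one_add_w_mul (a₁ := a₁) (a₂ := a₂) (a₃ := a₃) x Y w
  have b1 : (3 / 4 - Y) * fieldY a₁ a₂ a₃ x Y w ≤ -(8 / 100) := by nlinarith
  have b2 := mul_le_mul (show 74 / 100 ≤ 3 / 4 + defect Y w by linarith)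
    (show 8 / 100 ≤ -((3 / 4 - Y) * fieldY a₁ a₂ a₃ x Y w) by linarith) (by norm_num)
    (by linarith)
  have b3 : (3 / 4 - Y) ^ 2 ≤ 18 / 100 := by nlinarith
  by_contra! hc
  have b4 : 0 < (3 / 4 - Y) ^ 2 := by nlinarith
  nlinarith [mul_lt_mul_of_pos_left hc b4]

end Algebra

/-! ### Trajectories in the strip and the tube around the critical manifold -/

/-- The first zero of a continuous function that is negative at `0` and nonnegative at `T`. -/
theorem exists_first_zero {g : ℝ → ℝ} (hg : Continuous g) (h0 : g 0 < 0) {T : ℝ} (hT : 0 ≤ T)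
    (hgT : 0 ≤ g T) : ∃ t, 0 < t ∧ t ≤ T ∧ g t = 0 ∧ ∀ s ∈ Ico 0 t, g s < 0 := by
  set S : Set ℝ := Icc 0 T ∩ g ⁻¹' Ici 0 with hS
  have hSc : IsCompact S := isCompact_Icc.inter_right (isClosed_Ici.preimage hg)
  obtain ⟨t, ⟨⟨ht0, htT⟩, htg⟩, hmin⟩ := hSc.exists_isLeast ⟨T, ⟨hT, le_rfl⟩, hgT⟩
  have hlt : ∀ s ∈ Ico 0 t, g s < 0 := by
    rintro s ⟨hs0, hst⟩
    by_contra! h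
    exact absurd (hmin ⟨⟨hs0, hst.le.trans htT⟩, h⟩) (not_le.2 hst)
  have ht : 0 < t := by
    rcases ht0.lt_or_eq with h | h
    · exact h
    · rw [← h] at htg; exact absurd htg (not_le.2 h0)
  refine ⟨t, ht, htT, le_antisymm ?_ htg, hlt⟩
  have hcl : t ∈ closure (Ico 0 t) := by rw [closure_Ico ht.ne]; exact ⟨ht.le, le_rfl⟩
  exact closure_minimal (fun s hs => (hlt s hs).le) (isClosed_Iic.preimage hg) hcl

/-- A trajectory `(x, Y, w)` of the backward strip field with truncated arguments, starting at
`(3/2, 3/8 + δ c, 1)`, together with the standing smallness assumptions: `ε` bounds `|c - 8/3|`, `θ` is the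
opening of the tube and the bound for the `aᵢ`, and `δ` is small relative to `θ`. -/
structure BackwardStrip (ε θ δ c a₁ a₂ a₃ : ℝ) (x Y w : ℝ → ℝ) : Prop where
  ε_pos : 0 < ε
  ε_le : ε ≤ 1
  θ_eq : θ = ε ^ 2 / 10 ^ 7
  δ_pos : 0 < δ
  δ_le : δ ≤ θ / 10000
  c_mem : |c - 8 / 3| ≤ ε
  ha₁ : |a₁| ≤ θ
  ha₂ : |a₂| ≤ θ
  ha₃ : |a₃| ≤ θ
  x_zero : x 0 = 3 / 2
  Y_zero : Y 0 = 3 / 8 + δ * c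
  w_zero : w 0 = 1
  dx : ∀ t, HasDerivAt x (cl (w t)) t
  dY : ∀ t, HasDerivAt Y (fieldY a₁ a₂ a₃ (cl (x t)) (cl (Y t)) (cl (w t))) t
  dw : ∀ t, HasDerivAt w (defect (cl (Y t)) (cl (w t)) / (2 * δ)) t
  ne_zero : ∀ t, ¬(x t = 0 ∧ Y t = 0 ∧ w t = 0)

namespace BackwardStrip

variable {ε θ δ c a₁ a₂ a₃ : ℝ} {x Y w : ℝ → ℝ}

/-- Membership of the point at time `t` in the tube around the critical manifold. The tube is a cone with vertex
at the equilibrium. -/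
def InTube (θ : ℝ) (x Y w : ℝ → ℝ) (t : ℝ) : Prop :=
  |defect (Y t) (w t)| ≤ θ * rad (x t) (Y t)

theorem θ_pos (h : BackwardStrip ε θ δ c a₁ a₂ a₃ x Y w) : 0 < θ := by
  rw [h.θ_eq]; have := h.ε_pos; positivity

theorem θ_le_ε (h : BackwardStrip ε θ δ c a₁ a₂ a₃ x Y w) : θ ≤ ε / 10 ^ 7 := by
  rw [h.θ_eq]
  have h1 := h.ε_pos
  have h2 := h.ε_le
  gcongr
  nlinarith

theorem θ_le (h : BackwardStrip ε θ δ c a₁ a₂ a₃ x Y w) : θ ≤ 1 / 10 ^ 7 := by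
  have := h.θ_le_ε
  have := h.ε_le
  linarith

theorem c_bd (h : BackwardStrip ε θ δ c a₁ a₂ a₃ x Y w) : 0 ≤ c ∧ c ≤ 4 := by
  have := abs_le.1 h.c_mem
  have := h.ε_le
  constructor <;> linarith

theorem δc_bd (h : BackwardStrip ε θ δ c a₁ a₂ a₃ x Y w) : 0 ≤ δ * c ∧ δ * c ≤ 4 * (θ / 10000) := by
  obtain ⟨h1, h2⟩ := h.c_bd
  have h3 := h.δ_pos
  have h4 := h.δ_le
  constructor
  · positivity
  · nlinarith

theorem cont_x (h : BackwardStrip ε θ δ c a₁ a₂ a₃ x Y w) : Continuous x :=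
  continuous_iff_continuousAt.2 fun t => (h.dx t).continuousAt

theorem cont_Y (h : BackwardStrip ε θ δ c a₁ a₂ a₃ x Y w) : Continuous Y :=
  continuous_iff_continuousAt.2 fun t => (h.dY t).continuousAt

theorem cont_w (h : BackwardStrip ε θ δ c a₁ a₂ a₃ x Y w) : Continuous w :=
  continuous_iff_continuousAt.2 fun t => (h.dw t).continuousAt

/-- In the region and the tube the clamps are inactive. -/
theorem derivs (h : BackwardStrip ε θ δ c a₁ a₂ a₃ x Y w) {t : ℝ} (hR : Region (x t) (Y t))
    (hm : InTube θ x Y w t) :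
    HasDerivAt x (w t) t ∧ HasDerivAt Y (fieldY a₁ a₂ a₃ (x t) (Y t) (w t)) t ∧
      HasDerivAt w (defect (Y t) (w t) / (2 * δ)) t := by
  have hw := (abs_w_le hR (by linarith [h.θ_le]) hm).2
  have e1 : cl (x t) = x t := cl_eq (abs_le.2 ⟨by linarith [hR.x_gt], by linarith [hR.x_lt]⟩)
  have e2 : cl (Y t) = Y t := cl_eq (abs_le.2 ⟨by linarith [hR.Y_gt], by linarith [hR.Y_lt]⟩)
  have e3 : cl (w t) = w t := cl_eq hw.le
  have d1 := h.dx t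
  have d2 := h.dY t
  have d3 := h.dw t
  rw [e3] at d1
  rw [e1, e2, e3] at d2
  rw [e2, e3] at d3
  exact ⟨d1, d2, d3⟩

theorem lyap_deriv (h : BackwardStrip ε θ δ c a₁ a₂ a₃ x Y w) {t : ℝ} (hR : Region (x t) (Y t))
    (hm : InTube θ x Y w t) :
    HasDerivAt (fun t => lyap (x t) (Y t)) (lyapDot a₁ a₂ a₃ (x t) (Y t) (w t)) t := by
  obtain ⟨d1, d2, -⟩ := h.derivs hR hm
  have := ((d1.const_mul (-6)).exp).mul ((((d2.pow 2).sub (d1.div_const 8)).sub_const (1 / 48)).add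
    ((d1.mul d2).div_const 24))
  refine this.congr_deriv ?_
  simp only [lyapDot, Pi.mul_apply, Pi.add_apply, Pi.sub_apply, Pi.pow_apply]
  push_cast
  ring

theorem cont_lyap (h : BackwardStrip ε θ δ c a₁ a₂ a₃ x Y w) :
    Continuous (fun t => lyap (x t) (Y t)) := by
  have := h.cont_x
  have := h.cont_Y
  unfold lyap
  fun_prop

theorem lyap_zero (h : BackwardStrip ε θ δ c a₁ a₂ a₃ x Y w) :
    lyap (x 0) (Y 0) < -(1 / 25) * Real.exp (-9) := by
  obtain ⟨h1, h2⟩ := h.δc_bd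
  have h3 := h.θ_le
  rw [h.x_zero, h.Y_zero]
  unfold lyap
  rw [show (-6 : ℝ) * (3 / 2) = -9 by norm_num, mul_comm]
  refine mul_lt_mul_of_pos_right ?_ (Real.exp_pos _)
  nlinarith

/-- As long as the trajectory stays in the tube, it stays in the region: `lyap` decreases there, and the sublevel set
containing the starting point does not meet the line `x = -195/1000`. -/
theorem region (h : BackwardStrip ε θ δ c a₁ a₂ a₃ x Y w) {T : ℝ}
    (hT : ∀ t ∈ Icc 0 T, InTube θ x Y w t) : ∀ t ∈ Icc 0 T, Region (x t) (Y t) := by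
  set g : ℝ → ℝ := fun t => max (lyap (x t) (Y t) - -(1 / 25) * Real.exp (-9)) (-(195 / 1000) - x t)
    with hg
  have hgc : Continuous g := (h.cont_lyap.sub continuous_const).max
    (continuous_const.sub h.cont_x)
  have hg0 : g 0 < 0 := by
    refine max_lt (by linarith [h.lyap_zero]) ?_
    rw [h.x_zero]; norm_num
  have hgR : ∀ t, g t ≤ 0 → Region (x t) (Y t) := by
    intro t ht
    have h1 := (le_max_left _ _).trans ht
    have h2 := (le_max_right _ _).trans ht
    exact region_of_lyap (by linarith) (by linarith)
  intro t ht
  refine hgR t ?_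
  by_contra! hpos
  obtain ⟨s, hs0, hst, hgs, hlt⟩ := exists_first_zero hgc hg0 ht.1 hpos.le
  have hreg : ∀ u ∈ Icc 0 s, Region (x u) (Y u) := by
    intro u hu
    rcases hu.2.lt_or_eq with h' | h'
    · exact hgR u (hlt u ⟨hu.1, h'⟩).le
    · rw [h']; exact hgR s hgs.le
  have hanti : AntitoneOn (fun t => lyap (x t) (Y t)) (Icc 0 s) := by
    refine antitoneOn_of_hasDerivWithinAt_nonpos (convex_Icc 0 s) h.cont_lyap.continuousOn
      (f' := fun t => lyapDot a₁ a₂ a₃ (x t) (Y t) (w t)) ?_ ?_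
    · intro u hu
      rw [interior_Icc] at hu
      exact (h.lyap_deriv (hreg u (Ioo_subset_Icc_self hu))
        (hT u ⟨hu.1.le, by linarith [hu.2, ht.2]⟩)).hasDerivWithinAt
    · intro u hu
      rw [interior_Icc] at hu
      refine (lyapDot_le (hreg u (Ioo_subset_Icc_self hu)) (by linarith [h.θ_le]) h.ha₁ h.ha₂ h.ha₃
        (hT u ⟨hu.1.le, by linarith [hu.2, ht.2]⟩)).trans ?_
      have := Real.exp_pos (-12)
      have := rad_sq (x u) (Y u)
      have : 0 ≤ Real.exp (-12) * rad (x u) (Y u) ^ 2 := by positivity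
      linarith
  have h1 : lyap (x s) (Y s) ≤ lyap (x 0) (Y 0) :=
    hanti ⟨le_rfl, hs0.le⟩ ⟨hs0.le, le_rfl⟩ hs0.le
  have h2 := (hreg s ⟨hs0.le, le_rfl⟩).x_gt
  have : g s < 0 := max_lt (by linarith [h.lyap_zero]) (by linarith)
  linarith

/-- A differentiable function whose sign detects the tube. -/
noncomputable def tubeFun (θ : ℝ) (x Y w : ℝ → ℝ) (t : ℝ) : ℝ :=
  defect (Y t) (w t) ^ 2 - θ ^ 2 * (x t ^ 2 + Y t ^ 2)

theorem inTube_iff (hθ : 0 < θ) (t : ℝ) : InTube θ x Y w t ↔ tubeFun θ x Y w t ≤ 0 := by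
  unfold InTube tubeFun
  rw [← rad_sq, ← mul_pow, sub_nonpos, sq_le_sq,
    abs_of_nonneg (mul_nonneg hθ.le (rad_nonneg (x t) (Y t)))]

theorem defect_deriv (h : BackwardStrip ε θ δ c a₁ a₂ a₃ x Y w) {t : ℝ} (hR : Region (x t) (Y t))
    (hm : InTube θ x Y w t) : HasDerivAt (fun t => defect (Y t) (w t))
      ((3 / 4 - Y t) * (defect (Y t) (w t) / (2 * δ))
        - (1 + w t) * fieldY a₁ a₂ a₃ (x t) (Y t) (w t)) t := by
  obtain ⟨d1, d2, d3⟩ := h.derivs hR hm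
  refine (((d2.const_sub (3 / 4)).mul d3).sub d2).congr_deriv ?_
  ring

theorem cont_defect (h : BackwardStrip ε θ δ c a₁ a₂ a₃ x Y w) :
    Continuous (fun t => defect (Y t) (w t)) := by
  have := h.cont_w
  have := h.cont_Y
  unfold defect
  fun_prop

theorem cont_tubeFun (h : BackwardStrip ε θ δ c a₁ a₂ a₃ x Y w) :
    Continuous (tubeFun θ x Y w) := by
  have := h.cont_defect
  have := h.cont_Y
  have := h.cont_x
  unfold tubeFun
  fun_prop

theorem tubeFun_zero (h : BackwardStrip ε θ δ c a₁ a₂ a₃ x Y w) : tubeFun θ x Y w 0 < 0 := by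
  obtain ⟨h1, h2⟩ := h.δc_bd
  have h3 := h.θ_pos
  unfold tubeFun defect
  rw [h.x_zero, h.Y_zero, h.w_zero]
  have e : (3 / 4 - (3 / 8 + δ * c)) * 1 - (3 / 8 + δ * c) = -(2 * (δ * c)) := by ring
  rw [e]
  have : (2 * (δ * c)) ^ 2 ≤ θ ^ 2 := by gcongr; linarith
  nlinarith [sq_nonneg (3 / 8 + δ * c), pow_pos h3 2]

theorem tubeFun_exit (h : BackwardStrip ε θ δ c a₁ a₂ a₃ x Y w) {t : ℝ} (hR : Region (x t) (Y t))
    (hm : tubeFun θ x Y w t = 0) : ∃ d > 0, HasDerivAt (tubeFun θ x Y w) d t := by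
  have hθ := h.θ_pos
  have hin : InTube θ x Y w t := (inTube_iff hθ t).2 hm.le
  have habs : |defect (Y t) (w t)| = θ * rad (x t) (Y t) := by
    refine le_antisymm hin ?_
    have : (θ * rad (x t) (Y t)) ^ 2 ≤ defect (Y t) (w t) ^ 2 := by
      rw [mul_pow, rad_sq]; unfold tubeFun at hm; linarith
    exact (le_abs_self _).trans (sq_le_sq.1 this)
  have hr : 0 < rad (x t) (Y t) := by
    refine (rad_nonneg _ _).lt_of_ne fun hr => h.ne_zero t ?_
    have h1 := abs_fst_le_rad (x t) (Y t)
    have h2 := abs_snd_le_rad (x t) (Y t)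
    rw [← hr] at h1 h2 habs
    have hx := abs_nonpos_iff.1 h1
    have hY := abs_nonpos_iff.1 h2
    rw [mul_zero, abs_eq_zero] at habs
    unfold defect at habs
    rw [hY] at habs
    exact ⟨hx, hY, by linarith⟩
  obtain ⟨d1, d2, d3⟩ := h.derivs hR hin
  have d4 := h.defect_deriv hR hin
  refine ⟨_, tube_exit_algebra hR (by linarith [h.θ_le]) hθ h.δ_pos h.δ_le h.ha₁ h.ha₂ h.ha₃ habs hr,
    ?_⟩
  refine ((d4.pow 2).sub (((d1.pow 2).add (d2.pow 2)).const_mul (θ ^ 2))).congr_deriv ?_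
  push_cast
  ring

end BackwardStrip

/-! ### Exits from the tube, and trajectories that never exit -/

namespace BackwardStrip

variable {ε θ δ c a₁ a₂ a₃ : ℝ} {x Y w : ℝ → ℝ}

/-- Exit through the side `σ = ±1` of the tube, without having met the opposite side before. Only strict
inequalities occur, which makes this an open condition on the trajectory. -/
def Exits (θ : ℝ) (x Y w : ℝ → ℝ) (σ : ℝ) : Prop :=
  ∃ T ≥ 0, θ * rad (x T) (Y T) < σ * defect (Y T) (w T) ∧
    ∀ s ∈ Icc 0 T, -(θ * rad (x s) (Y s)) < σ * defect (Y s) (w s)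

theorem abs_lt_of_tubeFun (hθ : 0 < θ) {t : ℝ} (ht : tubeFun θ x Y w t < 0) :
    |defect (Y t) (w t)| < θ * rad (x t) (Y t) := by
  unfold tubeFun at ht
  rw [← rad_sq, ← mul_pow, sub_neg, sq_lt_sq,
    abs_of_nonneg (mul_nonneg hθ.le (rad_nonneg (x t) (Y t)))] at ht
  exact ht

theorem abs_gt_of_tubeFun (hθ : 0 < θ) {t : ℝ} (ht : 0 < tubeFun θ x Y w t) :
    θ * rad (x t) (Y t) < |defect (Y t) (w t)| := by
  unfold tubeFun at ht
  rw [← rad_sq, ← mul_pow, sub_pos, sq_lt_sq,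
    abs_of_nonneg (mul_nonneg hθ.le (rad_nonneg (x t) (Y t)))] at ht
  exact ht

theorem tube_upto (hθ : 0 < θ) {t : ℝ} (hz : tubeFun θ x Y w t = 0)
    (hlt : ∀ s ∈ Ico 0 t, tubeFun θ x Y w s < 0) : ∀ s ∈ Icc 0 t, InTube θ x Y w s := by
  intro s hs
  rw [inTube_iff hθ]
  rcases hs.2.lt_or_eq with h' | h'
  · exact (hlt s ⟨hs.1, h'⟩).le
  · rw [h', hz]

/-- At the first time on the boundary, the exit is transversal, so shortly afterwards the trajectory is outside. -/
theorem exits_of_first_zero (h : BackwardStrip ε θ δ c a₁ a₂ a₃ x Y w) {t : ℝ} (ht : 0 < t)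
    (hz : tubeFun θ x Y w t = 0) (hlt : ∀ s ∈ Ico 0 t, tubeFun θ x Y w s < 0)
    {σ : ℝ} (hσ : |σ| = 1) (hpos : 0 < σ * defect (Y t) (w t)) : Exits θ x Y w σ := by
  have hθ := h.θ_pos
  have hR := h.region (tube_upto hθ hz hlt) t ⟨ht.le, le_rfl⟩
  obtain ⟨d, hd, hder⟩ := h.tubeFun_exit hR hz
  have ev1 : ∀ᶠ s in 𝓝[>] t, 0 < tubeFun θ x Y w s := by
    have h1 := (hasDerivAt_iff_tendsto_slope.1 hder).mono_left
      (nhdsWithin_mono t (show Ioi t ⊆ {t}ᶜ from fun s hs => (ne_of_gt hs)))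
    filter_upwards [h1.eventually (lt_mem_nhds hd), self_mem_nhdsWithin] with s hs hs'
    rw [slope_def_field, hz, sub_zero] at hs
    have hst : 0 < s - t := sub_pos.2 hs'
    exact (div_pos_iff_of_pos_right hst).1 hs
  obtain ⟨b, hb, hbs⟩ := mem_nhdsGT_iff_exists_Ioo_subset.1 ev1
  have ev2 : ∀ᶠ s in 𝓝 t, 0 < σ * defect (Y s) (w s) :=
    ((continuous_const.mul h.cont_defect).tendsto t).eventually (lt_mem_nhds hpos)
  obtain ⟨r, hr, hrs⟩ := Metric.eventually_nhds_iff.1 ev2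
  have hb' : 0 < b - t := sub_pos.2 hb
  set ρ := min (b - t) r / 2 with hρ
  have hmin : 0 < min (b - t) r := lt_min hb' hr
  have hρ0 : 0 < ρ := by positivity
  have hρ1 : ρ < b - t := by have := min_le_left (b - t) r; linarith
  have hρ2 : ρ < r := by have := min_le_right (b - t) r; linarith
  have hp : ∀ s ∈ Icc t (t + ρ), 0 < σ * defect (Y s) (w s) := by
    intro s hs
    refine hrs ?_
    rw [Real.dist_eq, abs_of_nonneg (by linarith [hs.1])]
    linarith [hs.2]
  have habs : ∀ s, |σ * defect (Y s) (w s)| = |defect (Y s) (w s)| := fun s => by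
    rw [abs_mul, hσ, one_mul]
  refine ⟨t + ρ, by linarith, ?_, ?_⟩
  · have h1 := abs_gt_of_tubeFun hθ (hbs (show t + ρ ∈ Ioo t b from ⟨by linarith, by linarith⟩))
    rwa [← habs, abs_of_pos (hp _ ⟨by linarith, le_rfl⟩)] at h1
  · intro s hs
    rcases lt_or_ge s t with hst | hst
    · have h1 := abs_lt_of_tubeFun hθ (hlt s ⟨hs.1, hst⟩)
      rw [← habs] at h1
      exact (abs_lt.1 h1).1
    · have h1 := hp s ⟨hst, hs.2⟩
      have := mul_nonneg hθ.le (rad_nonneg (x s) (Y s))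
      linarith

/-- A trajectory that does not exit through either side stays in the interior of the tube. -/
theorem forever_or_exits (h : BackwardStrip ε θ δ c a₁ a₂ a₃ x Y w)
    (h1 : ¬ Exits θ x Y w 1) (h2 : ¬ Exits θ x Y w (-1)) : ∀ t ≥ 0, tubeFun θ x Y w t < 0 := by
  by_contra! hcon
  obtain ⟨T, hT, hT'⟩ := hcon
  obtain ⟨t, ht, -, hz, hlt⟩ := exists_first_zero h.cont_tubeFun h.tubeFun_zero hT hT'
  rcases lt_trichotomy (defect (Y t) (w t)) 0 with hd | hd | hd
  · exact h2 (h.exits_of_first_zero ht hz hlt (by simp) (by linarith))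
  · have hθ := h.θ_pos
    have hz' := hz
    unfold tubeFun at hz
    rw [hd] at hz
    have h3 : 0 < θ ^ 2 := by positivity
    have h4 : x t ^ 2 + Y t ^ 2 = 0 := by
      rcases mul_eq_zero.1 (show θ ^ 2 * (x t ^ 2 + Y t ^ 2) = 0 by linarith) with h | h
      · exact absurd h h3.ne'
      · exact h
    have hx : x t = 0 := by nlinarith [sq_nonneg (x t), sq_nonneg (Y t)]
    have hY : Y t = 0 := by nlinarith [sq_nonneg (x t), sq_nonneg (Y t)]
    unfold defect at hd
    rw [hY] at hd
    exact h.ne_zero t ⟨hx, hY, by linarith⟩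
  · exact h1 (h.exits_of_first_zero ht hz hlt (by simp) (by linarith))

theorem not_exits_both (h1 : Exits θ x Y w 1) (h2 : Exits θ x Y w (-1)) : False := by
  obtain ⟨T, hT, h3, h4⟩ := h1
  obtain ⟨S, hS, h5, h6⟩ := h2
  rcases le_total T S with hTS | hTS
  · have := h6 T ⟨hT, hTS⟩; linarith
  · have := h4 S ⟨hS, hTS⟩; linarith

theorem speed (h : BackwardStrip ε θ δ c a₁ a₂ a₃ x Y w) {T₀ T : ℝ}
    (hR : ∀ t ∈ Icc T₀ T, Region (x t) (Y t)) (hT : ∀ t ∈ Icc T₀ T, InTube θ x Y w t) :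
    ∀ t ∈ Icc T₀ T, |x t - x T₀| ≤ 5 * (t - T₀) ∧ |Y t - Y T₀| ≤ 44 * (t - T₀) := by
  intro t ht
  constructor
  · have := norm_image_sub_le_of_norm_deriv_le_segment' (f := x) (f' := w) (C := 5)
      (fun s hs => (h.derivs (hR s hs) (hT s hs)).1.hasDerivWithinAt)
      (fun s hs => (abs_w_le (hR s (Ico_subset_Icc_self hs)) (by linarith [h.θ_le])
        (hT s (Ico_subset_Icc_self hs))).2.le) t ht
    exact this
  · have := norm_image_sub_le_of_norm_deriv_le_segment' (f := Y)
      (f' := fun s => fieldY a₁ a₂ a₃ (x s) (Y s) (w s)) (C := 44)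
      (fun s hs => (h.derivs (hR s hs) (hT s hs)).2.1.hasDerivWithinAt)
      (fun s hs => (abs_fieldY_le (hR s (Ico_subset_Icc_self hs)) (by linarith [h.θ_le]) h.ha₁ h.ha₂ h.ha₃
        (hT s (Ico_subset_Icc_self hs))).trans
          (by linarith [rad_le (hR s (Ico_subset_Icc_self hs))])) t ht
    exact this

/-- For times of order `ε` a trajectory in the tube stays close to its starting point. -/
theorem near_start (h : BackwardStrip ε θ δ c a₁ a₂ a₃ x Y w) {T : ℝ}
    (hTε : T ≤ ε / 50000) (hT : ∀ t ∈ Icc 0 T, InTube θ x Y w t) :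
    ∀ t ∈ Icc 0 T, |x t - 3 / 2| ≤ ε / 1000 ∧ |Y t - 3 / 8| ≤ ε / 1000 := by
  intro t ht
  obtain ⟨h1, h2⟩ := h.speed (h.region hT) hT t ht
  obtain ⟨h3, h4⟩ := h.δc_bd
  have h5 := h.θ_le_ε
  have h6 := h.ε_pos
  rw [h.x_zero] at h1
  rw [h.Y_zero] at h2
  have := ht.2
  refine ⟨h1.trans (by linarith), ?_⟩
  rw [abs_le] at h2 ⊢
  constructor <;> linarith

/-- For `c = 8/3 + σ ε` the deviation of `u = defect / (2 δ)` from `-8/3` grows at least linearly, at rate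
`ε / (32 δ)`. Indeed near the start `u` nearly solves `2 δ u' = 3/8 u + 1`, whose equilibrium `u = -8/3` is
repelling, and `u 0 = -c`. -/
theorem endpoint_fence (h : BackwardStrip ε θ δ c a₁ a₂ a₃ x Y w) {T σ : ℝ}
    (hσ : |σ| = 1) (hc : c = 8 / 3 + σ * ε)
    (hTε : T ≤ ε / 50000) (hT : ∀ t ∈ Icc 0 T, InTube θ x Y w t) :
    ∀ t ∈ Icc 0 T, σ * (defect (Y t) (w t) / (2 * δ) + 8 / 3) ≤ -(ε + ε / (32 * δ) * t) := by
  have hδ := h.δ_pos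
  have hε := h.ε_pos
  have hR := h.region hT
  have hσ2 : σ * σ = 1 := by rw [← abs_mul_abs_self, hσ]; norm_num
  refine image_le_of_deriv_right_lt_deriv_boundary'
    (f' := fun t => σ * (((3 / 4 - Y t) * (defect (Y t) (w t) / (2 * δ))
        - (1 + w t) * fieldY a₁ a₂ a₃ (x t) (Y t) (w t)) / (2 * δ)))
    (B' := fun _ => -(ε / (32 * δ))) ?_ ?_ ?_ ?_ ?_ ?_
  · have := h.cont_defect
    exact Continuous.continuousOn (by fun_prop)
  · intro t ht
    have ht' := Ico_subset_Icc_self ht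
    exact (((h.defect_deriv (hR t ht') (hT t ht')).div_const _).add_const _).const_mul σ
      |>.hasDerivWithinAt
  · rw [h.Y_zero, h.w_zero]
    have e : defect (3 / 8 + δ * c) 1 / (2 * δ) = -c := by unfold defect; field_simp; ring
    rw [e, hc]
    nlinarith
  · exact Continuous.continuousOn (by fun_prop)
  · intro t ht
    have := (((hasDerivAt_id t).const_mul (ε / (32 * δ))).const_add ε).neg
    exact (this.congr_deriv (by simp)).hasDerivWithinAt
  · intro t ht heq
    have ht' := Ico_subset_Icc_self ht
    obtain ⟨n1, n2⟩ := h.near_start hTε hT t ht'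
    have n3 := near_start_algebra (η := ε / 1000) (hR t ht') (by linarith [h.ε_le])
      (by linarith [h.θ_le_ε]) h.ha₁ h.ha₂ h.ha₃ (hT t ht') n1 n2
    set q := defect (Y t) (w t) / (2 * δ)
    set E := -(1 + w t) * fieldY a₁ a₂ a₃ (x t) (Y t) (w t) with hE
    have hq : σ * q = -(8 / 3) * σ - (ε + ε / (32 * δ) * t) := by linarith
    have hκ : 0 ≤ ε / (32 * δ) * t := mul_nonneg (by positivity) ht.1
    have hD := abs_le.1 n2
    have b1 : σ * (E - 1) ≤ 40 * (ε / 1000) := by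
      refine (le_abs_self _).trans ?_
      rw [abs_mul, hσ, one_mul]; exact n3
    have b2 : σ * (Y t - 3 / 8) ≤ ε / 1000 := by
      refine (le_abs_self _).trans ?_
      rw [abs_mul, hσ, one_mul]; exact n2
    have e : σ * (((3 / 4 - Y t) * q - (1 + w t) * fieldY a₁ a₂ a₃ (x t) (Y t) (w t)) / (2 * δ))
        = ((3 / 4 - Y t) * (σ * q) + σ * E) / (2 * δ) := by rw [hE]; ring
    rw [e, hq]
    have b3 : (3 / 4 - Y t) * (-(8 / 3) * σ - (ε + ε / (32 * δ) * t)) + σ * E ≤ -(ε / 8) := by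
      have b4 : 0 ≤ (3 / 4 - Y t - 37 / 100) * (ε + ε / (32 * δ) * t) :=
        mul_nonneg (by linarith [h.ε_le]) (by linarith)
      nlinarith
    calc _ ≤ -(ε / 8) / (2 * δ) := by gcongr
      _ = -(2 * (ε / (32 * δ))) := by field_simp; norm_num
      _ < _ := by have : 0 < ε / (32 * δ) := by positivity
                  linarith

/-- At the end points of the interval of shooting parameters the trajectory exits, on opposite sides: the growth
in `endpoint_fence` exceeds the width of the tube, which is of order `ε²`, within time `ε / 50000`. -/
theorem endpoint_exits (h : BackwardStrip ε θ δ c a₁ a₂ a₃ x Y w) {σ : ℝ}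
    (hσ : |σ| = 1) (hc : c = 8 / 3 + σ * ε) : Exits θ x Y w (-σ) := by
  have hδ := h.δ_pos
  have hε := h.ε_pos
  have hθ := h.θ_pos
  have hσ' : |-σ| = 1 := by rwa [abs_neg]
  have hτ : 0 ≤ ε / 50000 := by positivity
  have hσb := abs_le.1 hσ.le
  have key : ∀ t ∈ Icc 0 (ε / 50000), (∀ s ∈ Icc 0 t, InTube θ x Y w s) →
      σ * defect (Y t) (w t) ≤ 16 / 3 * δ - ε / 16 * t := by
    intro t ht htube
    have hf := h.endpoint_fence hσ hc ht.2 htube t ⟨ht.1, le_rfl⟩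
    have e : σ * defect (Y t) (w t)
        = 2 * δ * (σ * (defect (Y t) (w t) / (2 * δ) + 8 / 3)) - 16 / 3 * δ * σ := by
      field_simp; ring
    have e2 : 2 * δ * (ε + ε / (32 * δ) * t) = 2 * δ * ε + ε / 16 * t := by field_simp; ring
    have := mul_le_mul_of_nonneg_left hf (show 0 ≤ 2 * δ by positivity)
    have : 0 ≤ δ * ε := by positivity
    rw [e]
    nlinarith
  by_cases hcase : ∃ T ∈ Icc 0 (ε / 50000), 0 ≤ tubeFun θ x Y w T
  · obtain ⟨T, hT, hpos⟩ := hcase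
    obtain ⟨t, ht, htT, hz, hlt⟩ := exists_first_zero h.cont_tubeFun h.tubeFun_zero hT.1 hpos
    have htube := tube_upto h.θ_pos hz hlt
    refine h.exits_of_first_zero ht hz hlt hσ' ?_
    have hk := key t ⟨ht.le, htT.trans hT.2⟩ htube
    have hx := (h.near_start (htT.trans hT.2) htube t ⟨ht.le, le_rfl⟩).1
    have hε1 := h.ε_le
    have hx1 : 1 ≤ x t := by linarith [(abs_le.1 hx).1]
    have h2 : θ ^ 2 ≤ defect (Y t) (w t) ^ 2 := by
      unfold tubeFun at hz
      have : θ ^ 2 * 1 ≤ θ ^ 2 * (x t ^ 2 + Y t ^ 2) := by gcongr; nlinarith [sq_nonneg (Y t)]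
      linarith
    have h3 : θ ≤ |σ * defect (Y t) (w t)| := by
      rw [abs_mul, hσ, one_mul]
      exact (le_abs_self θ).trans (sq_le_sq.1 h2)
    have h4 : 0 ≤ ε / 16 * t := by positivity
    have h5 := h.δ_le
    by_contra! hcon
    rw [abs_of_nonneg (by linarith)] at h3
    linarith
  · push Not at hcase
    exfalso
    have htube : ∀ s ∈ Icc 0 (ε / 50000), InTube θ x Y w s := fun s hs =>
      (inTube_iff hθ s).2 (hcase s hs).le
    have hmem : ε / 50000 ∈ Icc 0 (ε / 50000) := ⟨hτ, le_rfl⟩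
    have hk := key _ hmem htube
    have h1 := htube _ hmem
    have h2 := rad_le (h.region htube _ hmem)
    have h3 : |σ * defect (Y (ε / 50000)) (w (ε / 50000))| ≤ θ * (11 / 5) := by
      rw [abs_mul, hσ, one_mul]
      exact h1.trans (by gcongr)
    have h4 := (abs_le.1 h3).1
    have h5 := h.δ_le
    have h6 := h.θ_eq
    nlinarith

theorem forever_region (h : BackwardStrip ε θ δ c a₁ a₂ a₃ x Y w)
    (hf : ∀ t ≥ 0, InTube θ x Y w t) {t : ℝ} (ht : 0 ≤ t) : Region (x t) (Y t) :=
  h.region (T := t) (fun s hs => hf s hs.1) t ⟨ht, le_rfl⟩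

/-- Confinement by the curve of `barrier_algebra`. -/
theorem barrier (h : BackwardStrip ε θ δ c a₁ a₂ a₃ x Y w)
    (hf : ∀ t ≥ 0, InTube θ x Y w t) {t : ℝ} (ht : 0 ≤ t) (hYt : 0 ≤ Y t) :
    Y t ^ 2 - x t / 16 - 3 / 64 - 1 / 1000 < 0 := by
  set G : ℝ → ℝ := fun t => Y t ^ 2 - x t / 16 - 3 / 64 - 1 / 1000 with hG
  have cx := h.cont_x
  have cY := h.cont_Y
  have hGc : Continuous G := by fun_prop
  by_contra! hcon
  have h0 : min (G 0) (Y 0) < 0 := by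
    refine (min_le_left _ _).trans_lt ?_
    obtain ⟨h1, h2⟩ := h.δc_bd
    have := h.θ_le
    simp only [hG]
    rw [h.x_zero, h.Y_zero]
    nlinarith
  obtain ⟨s, hs, -, hz, hlt⟩ := exists_first_zero (hGc.min cY) h0 ht (le_min hcon hYt)
  have hR := h.forever_region hf hs.le
  have hGs : 0 ≤ G s := by rw [← hz]; exact min_le_left _ _
  have hYs : 0 ≤ Y s := by rw [← hz]; exact min_le_right _ _
  have hYpos : 0 < Y s := by
    refine hYs.lt_of_ne fun h' => ?_
    simp only [hG] at hGs
    rw [← h'] at hGs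
    linarith [hR.x_gt]
  have hG0 : G s = 0 := by
    rcases min_choice (G s) (Y s) with h' | h' <;> linarith
  obtain ⟨d1, d2, -⟩ := h.derivs hR (hf s hs.le)
  have hd : HasDerivAt G (2 * Y s * fieldY a₁ a₂ a₃ (x s) (Y s) (w s) - w s / 16) s := by
    refine ((((d2.pow 2).sub (d1.div_const 16)).sub_const (3 / 64)).sub_const
      (1 / 1000)).congr_deriv ?_
    push_cast; ring
  have hneg := barrier_algebra hR (by linarith [h.θ_le]) h.ha₁ h.ha₂ h.ha₃ (hf s hs.le) hYs hG0
  have h1 := (hasDerivAt_iff_tendsto_slope.1 hd).mono_left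
      (nhdsWithin_mono s (show Iio s ⊆ {s}ᶜ from fun u hu => (ne_of_lt hu)))
  have ev1 := h1.eventually (gt_mem_nhds hneg)
  have ev2 : ∀ᶠ u in 𝓝[<] s, 0 < Y u :=
    ((cY.tendsto s).eventually (lt_mem_nhds hYpos)).filter_mono nhdsWithin_le_nhds
  have ev3 : ∀ᶠ u in 𝓝[<] s, 0 < u :=
    (lt_mem_nhds hs : ∀ᶠ u in 𝓝 s, 0 < u).filter_mono nhdsWithin_le_nhds
  obtain ⟨u, ⟨⟨hu1, hu2⟩, hu3⟩, hu4⟩ := (((ev1.and ev2).and ev3).and self_mem_nhdsWithin).exists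
  have hu5 : u - s < 0 := sub_neg.2 hu4
  rw [slope_def_field, hG0, sub_zero, div_neg_iff] at hu1
  rcases hu1 with ⟨hu, -⟩ | ⟨-, hu⟩
  · have := hlt u ⟨hu3.le, hu4⟩
    exact absurd this (not_lt.2 (lt_min hu hu2).le)
  · linarith

/-- Where `Y` is not small, the defect of a trajectory that stays in the tube forever is negative: otherwise the driving
term of `zone_algebra` would make it grow at a definite rate for time `1/2000`, beyond the width of the tube. -/
theorem defect_neg (h : BackwardStrip ε θ δ c a₁ a₂ a₃ x Y w)
    (hf : ∀ t ≥ 0, InTube θ x Y w t) {t : ℝ} (ht : 0 ≤ t) (hYt : 36 / 100 ≤ Y t) :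
    defect (Y t) (w t) < 0 := by
  by_contra! hcon
  have hδ := h.δ_pos
  have htube : ∀ s ∈ Icc t (t + 1 / 2000), InTube θ x Y w s := fun s hs => hf s (ht.trans hs.1)
  have hR : ∀ s ∈ Icc t (t + 1 / 2000), Region (x s) (Y s) := fun s hs =>
    h.forever_region hf (ht.trans hs.1)
  have hY : ∀ s ∈ Icc t (t + 1 / 2000), 33 / 100 ≤ Y s := by
    intro s hs
    have := (abs_le.1 (h.speed hR htube s hs).2).1
    linarith [hs.2]
  have key : ∀ s ∈ Icc t (t + 1 / 2000), -defect (Y s) (w s) ≤ -(1 / 20 * (s - t)) := by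
    refine image_le_of_deriv_right_lt_deriv_boundary'
      (f' := fun t => -((3 / 4 - Y t) * (defect (Y t) (w t) / (2 * δ))
        - (1 + w t) * fieldY a₁ a₂ a₃ (x t) (Y t) (w t))) (B' := fun _ => -(1 / 20)) ?_ ?_ ?_ ?_ ?_ ?_
    · have := h.cont_defect
      exact Continuous.continuousOn (by fun_prop)
    · intro s hs
      have hs' := Ico_subset_Icc_self hs
      exact (h.defect_deriv (hR s hs') (htube s hs')).neg.hasDerivWithinAt
    · simpa using hcon
    · exact Continuous.continuousOn (by fun_prop)
    · intro s hs
      have := (((hasDerivAt_id s).sub_const t).const_mul (1 / 20)).neg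
      exact (this.congr_deriv (by simp)).hasDerivWithinAt
    · intro s hs heq
      have hs' := Ico_subset_Icc_self hs
      have hz := zone_algebra (hR s hs') (by linarith [h.θ_le]) h.ha₁ h.ha₂ h.ha₃ (htube s hs')
        (hY s hs') (h.barrier hf (ht.trans hs.1) (by linarith [hY s hs']))
      have hd : 0 ≤ defect (Y s) (w s) := by linarith [hs.1]
      have : 0 ≤ (3 / 4 - Y s) * (defect (Y s) (w s) / (2 * δ)) :=
        mul_nonneg (by linarith [(hR s hs').Y_lt]) (by positivity)
      linarith
  have hmem : t + 1 / 2000 ∈ Icc t (t + 1 / 2000) := ⟨by linarith, le_rfl⟩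
  have h1 := key _ hmem
  have h2 : _ ≤ θ * rad _ _ := htube _ hmem
  have h3 := rad_le (hR _ hmem)
  have h4 := le_abs_self (defect (Y (t + 1 / 2000)) (w (t + 1 / 2000)))
  have h5 := mul_le_mul h.θ_le h3 (rad_nonneg _ _) (by norm_num)
  linarith

/-- A trajectory that stays in the tube forever stays in the strip. At `w = 1` one has `Y` close to `3/8`, so the defect,
and with it the derivative of `w`, is negative. -/
theorem w_mem (h : BackwardStrip ε θ δ c a₁ a₂ a₃ x Y w)
    (hf : ∀ t ≥ 0, InTube θ x Y w t) {t : ℝ} (ht : 0 ≤ t) : w t ∈ Icc (-1) 1 := by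
  have hsm : ∀ s ≥ 0, |defect (Y s) (w s)| ≤ 1 / 1000 := fun s hs => by
    have h2 : _ ≤ θ * rad _ _ := hf s hs
    have h5 := mul_le_mul h.θ_le (rad_le (h.forever_region hf hs)) (rad_nonneg _ _) (by norm_num)
    linarith
  constructor
  · have h1 := (abs_le.1 (hsm t ht)).1
    have hR := h.forever_region hf ht
    unfold defect at h1
    by_contra! hc
    nlinarith [hR.Y_lt, mul_pos (show 0 < 3 / 4 - Y t by linarith [hR.Y_lt]) (show 0 < -1 - w t by linarith)]
  · have key : ∀ s ∈ Icc 0 t, w s ≤ 1 := by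
      refine image_le_of_deriv_right_lt_deriv_boundary'
        (f' := fun t => defect (Y t) (w t) / (2 * δ)) (B := fun _ => 1) (B' := fun _ => 0)
        h.cont_w.continuousOn ?_ h.w_zero.le continuousOn_const
        (fun s _ => hasDerivWithinAt_const _ _ _) ?_
      · intro s hs
        exact (h.derivs (h.forever_region hf hs.1) (hf s hs.1)).2.2.hasDerivWithinAt
      · intro s hs heq
        refine div_neg_of_neg_of_pos (h.defect_neg hf hs.1 ?_) (by linarith [h.δ_pos])
        have h1 := (abs_le.1 (hsm s hs.1)).2
        unfold defect at h1
        rw [heq] at h1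
        linarith
    exact key t ⟨ht, le_rfl⟩

/-- Since `lyap + 1/48` is comparable to `rad ^ 2` in the region and its derivative is at most a negative multiple of
`rad ^ 2`, it decays exponentially. -/
theorem tendsto_zero (h : BackwardStrip ε θ δ c a₁ a₂ a₃ x Y w)
    (hf : ∀ t ≥ 0, InTube θ x Y w t) :
    Tendsto x atTop (𝓝 0) ∧ Tendsto Y atTop (𝓝 0) ∧ Tendsto w atTop (𝓝 0) := by
  set k : ℝ := Real.exp (-12) / 20000 with hk
  have hkpos : 0 < k := by positivity
  set N : ℝ → ℝ := fun t => (lyap (x t) (Y t) + 1 / 48) * Real.exp (k * t) with hN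
  have hNd : ∀ t ≥ 0, HasDerivAt N (lyapDot a₁ a₂ a₃ (x t) (Y t) (w t) * Real.exp (k * t)
      + (lyap (x t) (Y t) + 1 / 48) * (Real.exp (k * t) * k)) t := by
    intro t ht
    have d := h.lyap_deriv (h.forever_region hf ht) (hf t ht)
    refine ((d.add_const (1 / 48)).mul (((hasDerivAt_id t).const_mul k).exp)).congr_deriv ?_
    simp
  have hanti : AntitoneOn N (Ici 0) := by
    refine antitoneOn_of_hasDerivWithinAt_nonpos (convex_Ici 0)
      (fun t ht => (hNd t ht).continuousAt.continuousWithinAt)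
      (fun t ht => (hNd t (interior_subset ht)).hasDerivWithinAt) ?_
    intro t ht
    have ht0 : 0 ≤ t := interior_subset ht
    have hR := h.forever_region hf ht0
    have h1 := lyapDot_le hR (by linarith [h.θ_le]) h.ha₁ h.ha₂ h.ha₃ (hf t ht0)
    have h2 := mul_le_mul_of_nonneg_left (lyap_upper hR) hkpos.le
    have e : lyapDot a₁ a₂ a₃ (x t) (Y t) (w t) * Real.exp (k * t)
      + (lyap (x t) (Y t) + 1 / 48) * (Real.exp (k * t) * k) =
      Real.exp (k * t) * (lyapDot a₁ a₂ a₃ (x t) (Y t) (w t) + k * (lyap (x t) (Y t) + 1 / 48)) := by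
      ring
    rw [e]
    refine mul_nonpos_of_nonneg_of_nonpos (Real.exp_pos _).le ?_
    rw [hk] at h2 ⊢
    linarith
  have hr2 : Tendsto (fun t => rad (x t) (Y t) ^ 2) atTop (𝓝 0) := by
    have hlim : Tendsto (fun t => N 0 * (10 * Real.exp 12) * Real.exp (-(k * t))) atTop (𝓝 0) := by
      have : Tendsto (fun t : ℝ => k * t) atTop atTop := tendsto_id.const_mul_atTop hkpos
      simpa using (Real.tendsto_exp_neg_atTop_nhds_zero.comp this).const_mul
        (N 0 * (10 * Real.exp 12))
    refine squeeze_zero' (Eventually.of_forall fun t => sq_nonneg _) ?_ hlim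
    filter_upwards [eventually_ge_atTop 0] with t ht
    have h1 := lyap_lower (h.forever_region hf ht)
    have h2 : N t ≤ N 0 := hanti (mem_Ici.2 le_rfl) ht ht
    have e1 : Real.exp (-12) * Real.exp 12 = 1 := by rw [← Real.exp_add]; simp
    have e2 : Real.exp (k * t) * Real.exp (-(k * t)) = 1 := by rw [← Real.exp_add]; simp
    have p1 := Real.exp_pos 12
    have p2 := Real.exp_pos (-(k * t))
    calc rad (x t) (Y t) ^ 2
        = (Real.exp (-12) * Real.exp 12) * rad (x t) (Y t) ^ 2 := by rw [e1, one_mul]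
      _ = (Real.exp (-12) / 10 * rad (x t) (Y t) ^ 2) * (10 * Real.exp 12) := by ring
      _ ≤ (lyap (x t) (Y t) + 1 / 48) * (10 * Real.exp 12) := by gcongr
      _ = (lyap (x t) (Y t) + 1 / 48) * (Real.exp (k * t) * Real.exp (-(k * t)))
            * (10 * Real.exp 12) := by rw [e2, mul_one]
      _ = N t * (10 * Real.exp 12) * Real.exp (-(k * t)) := by simp only [hN]; ring
      _ ≤ _ := by gcongr
  have hr : Tendsto (fun t => rad (x t) (Y t)) atTop (𝓝 0) := by
    have := (Real.continuous_sqrt.tendsto 0).comp hr2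
    rw [Real.sqrt_zero] at this
    refine this.congr fun t => ?_
    simp [Real.sqrt_sq (rad_nonneg _ _)]
  refine ⟨squeeze_zero_norm (fun t => abs_fst_le_rad _ _) hr,
    squeeze_zero_norm (fun t => abs_snd_le_rad _ _) hr, ?_⟩
  refine squeeze_zero_norm' ?_ (by simpa using hr.const_mul 8)
  filter_upwards [eventually_ge_atTop 0] with t ht
  exact (abs_w_le (h.forever_region hf ht) (by linarith [h.θ_le]) (hf t ht)).1

end BackwardStrip

/-! ### The unstable branch by shooting -/

/-- The backward strip field on `(x, Y, w, a₁, a₂, a₃)`, with the parameters as additional constant variables, so that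
continuous dependence on parameters is contained in continuous dependence on initial values. -/
noncomputable def stripField (δ : ℝ) (p : Fin 6 → ℝ) : Fin 6 → ℝ :=
  ![p 2, fieldY (p 3) (p 4) (p 5) (p 0) (p 1) (p 2), defect (p 1) (p 2) / (2 * δ), 0, 0, 0]

theorem contDiff_stripField (δ : ℝ) : ContDiff ℝ 1 (stripField δ) := by
  rw [contDiff_pi]
  intro i
  fin_cases i <;> simp [stripField, fieldY, defect] <;> fun_prop

/-- Times are replaced by `max t 0` because joint continuity of the flow is only available for `t ≥ 0`. -/
theorem BackwardStrip.isOpen_exits {θ σ : ℝ} {x Y w : ℝ → ℝ → ℝ}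
    (j0 : Continuous fun z : ℝ × ℝ => x z.1 (max z.2 0))
    (j1 : Continuous fun z : ℝ × ℝ => Y z.1 (max z.2 0))
    (j2 : Continuous fun z : ℝ × ℝ => w z.1 (max z.2 0)) :
    IsOpen {c | BackwardStrip.Exits θ (x c) (Y c) (w c) σ} := by
  have cr : Continuous fun z : ℝ × ℝ => θ * rad (x z.1 (max z.2 0)) (Y z.1 (max z.2 0)) :=
    continuous_const.mul (Real.continuous_sqrt.comp ((j0.pow 2).add (j1.pow 2)))
  have cd : Continuous fun z : ℝ × ℝ => σ * defect (Y z.1 (max z.2 0)) (w z.1 (max z.2 0)) :=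
    continuous_const.mul (((continuous_const.sub j1).mul j2).sub j1)
  rw [isOpen_iff_mem_nhds]
  rintro c ⟨T, hT, h1, h2⟩
  have ev1 : ∀ᶠ c' in 𝓝 c, θ * rad (x c' T) (Y c' T) < σ * defect (Y c' T) (w c' T) := by
    have hmk : Continuous fun c' : ℝ => (c', T) := by fun_prop
    have := ((cr.comp hmk).tendsto c).eventually_lt ((cd.comp hmk).tendsto c)
      (by simpa [max_eq_left hT] using h1)
    simpa [max_eq_left hT] using this
  have ev2 : ∀ᶠ c' in 𝓝 c, ∀ s ∈ Icc 0 T, -(θ * rad (x c' (max s 0)) (Y c' (max s 0)))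
      < σ * defect (Y c' (max s 0)) (w c' (max s 0)) := by
    refine isCompact_Icc.eventually_forall_of_forall_eventually fun s hs => ?_
    exact (cr.neg.tendsto (c, s)).eventually_lt (cd.tendsto (c, s))
      (by simpa [max_eq_left hs.1] using h2 s hs)
  filter_upwards [ev1, ev2] with c' h3 h4
  refine ⟨T, hT, h3, fun s hs => ?_⟩
  simpa [max_eq_left hs.1] using h4 s hs

/-- Shooting in `c`: for some `c` near `8/3` the backward trajectory from `(3/2, 3/8 + δ c, 1)` stays in the strip and tends
to the equilibrium. The parameters `aᵢ` may depend continuously on `c`. -/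
theorem exists_unstable_branch {ε θ δ : ℝ} (hε : 0 < ε) (hε1 : ε ≤ 1) (hθ : θ = ε ^ 2 / 10 ^ 7)
    (hδ : 0 < δ) (hδθ : δ ≤ θ / 10000) {a₁ a₂ a₃ : ℝ → ℝ} (ca₁ : Continuous a₁)
    (ca₂ : Continuous a₂) (ca₃ : Continuous a₃) (ha₁ : ∀ c, |a₁ c| ≤ θ) (ha₂ : ∀ c, |a₂ c| ≤ θ)
    (ha₃ : ∀ c, |a₃ c| ≤ θ) :
    ∃ c, |c - 8 / 3| ≤ ε ∧ ∃ x Y w : ℝ → ℝ, x 0 = 3 / 2 ∧ Y 0 = 3 / 8 + δ * c ∧ w 0 = 1 ∧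
      (∀ t ≥ 0, HasDerivAt x (w t) t ∧
        HasDerivAt Y (fieldY (a₁ c) (a₂ c) (a₃ c) (x t) (Y t) (w t)) t ∧
        HasDerivAt w (defect (Y t) (w t) / (2 * δ)) t ∧ w t ∈ Icc (-1) 1) ∧
      Tendsto x atTop (𝓝 0) ∧ Tendsto Y atTop (𝓝 0) ∧ Tendsto w atTop (𝓝 0) := by
  have hθ5 : θ ≤ 5 := by rw [hθ]; nlinarith
  obtain ⟨K, Φ, hlip, h0, hd, hc⟩ := exists_clamped_flow (contDiff_stripField δ)
  set p : ℝ → Fin 6 → ℝ := fun c => ![3 / 2, 3 / 8 + δ * c, 1, a₁ c, a₂ c, a₃ c] with hp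
  have hpc : Continuous p := by
    refine continuous_pi fun i => ?_
    fin_cases i <;> simp [hp] <;> fun_prop
  have hdi : ∀ c t i, HasDerivAt (fun t => Φ (p c) t i)
      (stripField δ (clv (Φ (p c) t)) i) t := fun c t i =>
    (hasDerivAt_pi.1 (hd (p c) t)) i
  have hconst : ∀ c t, Φ (p c) t 3 = a₁ c ∧ Φ (p c) t 4 = a₂ c ∧ Φ (p c) t 5 = a₃ c := by
    intro c t
    have hk : ∀ i, (∀ q, stripField δ q i = 0) → Φ (p c) t i = p c i := by
      intro i hi
      have hcst := is_const_of_deriv_eq_zero (f := fun t => Φ (p c) t i)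
        (fun s => (hdi c s i).differentiableAt) (fun s => by rw [(hdi c s i).deriv, hi]) t 0
      simpa [h0] using hcst
    exact ⟨hk 3 fun q => by simp [stripField], hk 4 fun q => by simp [stripField],
      hk 5 fun q => by simp [stripField]⟩
  have hstrip : ∀ c, |c - 8 / 3| ≤ ε → BackwardStrip ε θ δ c (a₁ c) (a₂ c) (a₃ c)
      (fun t => Φ (p c) t 0) (fun t => Φ (p c) t 1) (fun t => Φ (p c) t 2) := by
    intro c hcm
    refine ⟨hε, hε1, hθ, hδ, hδθ, hcm, ha₁ c, ha₂ c, ha₃ c, by simp [h0, hp], by simp [h0, hp],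
      by simp [h0, hp], fun t => ?_, fun t => ?_, fun t => ?_, fun t ht => ?_⟩
    · simpa [stripField, clv] using hdi c t 0
    · obtain ⟨e1, e2, e3⟩ := hconst c t
      have := hdi c t 1
      simp only [stripField, clv, e1, e2, e3, cl_eq ((ha₁ c).trans hθ5), cl_eq ((ha₂ c).trans hθ5),
        cl_eq ((ha₃ c).trans hθ5)] at this
      simpa using this
    · simpa [stripField, clv] using hdi c t 2
    · -- the equilibrium is not reached in finite time
      have heq : stripField δ (clv (Φ (p c) t)) = 0 := by
        obtain ⟨e1, e2, e3⟩ := ht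
        funext i
        replace e1 : Φ (p c) t 0 = 0 := e1
        replace e2 : Φ (p c) t 1 = 0 := e2
        replace e3 : Φ (p c) t 2 = 0 := e3
        have z : cl 0 = 0 := cl_eq (by simp)
        fin_cases i <;> simp [stripField, clv, e1, e2, e3, z, fieldY, defect]
      have := ODE_solution_unique_univ (v := fun _ q => stripField δ (clv q)) (s := fun _ => univ)
        (K := K) (t₀ := t) (f := Φ (p c)) (g := fun _ => Φ (p c) t)
        (fun _ => hlip.lipschitzOnWith) (fun s => ⟨hd _ s, trivial⟩)
        (fun s => ⟨by simpa [heq] using hasDerivAt_const s (Φ (p c) t), trivial⟩) rfl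
      have h1 := congrFun (congrFun this 0) 0
      have h2 : Φ (p c) t 0 = 0 := ht.1
      simp only [h0, h2] at h1
      simp [hp] at h1
  have hj : Continuous (fun z : ℝ × ℝ => Φ (p z.1) (max z.2 0)) := by
    have := hc.comp_continuous (f := fun z : ℝ × ℝ => (p z.1, max z.2 0)) (by fun_prop)
      (fun z => ⟨trivial, le_max_right z.2 0⟩)
    exact this
  have hji : ∀ i, Continuous (fun z : ℝ × ℝ => Φ (p z.1) (max z.2 0) i) := fun i =>
    (continuous_apply i).comp hj
  set Ex : ℝ → ℝ → Prop := fun σ c => BackwardStrip.Exits θ (fun t => Φ (p c) t 0)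
    (fun t => Φ (p c) t 1) (fun t => Φ (p c) t 2) σ with hEx
  have hopen : ∀ σ, IsOpen {c | Ex σ c} := by
    exact fun σ => BackwardStrip.isOpen_exits (x := fun c t => Φ (p c) t 0)
      (Y := fun c t => Φ (p c) t 1) (w := fun c t => Φ (p c) t 2) (hji 0) (hji 1) (hji 2)
  have hmem : ∀ c, c ∈ Icc (8 / 3 - ε) (8 / 3 + ε) → |c - 8 / 3| ≤ ε := fun c hc =>
    abs_le.2 ⟨by linarith [hc.1], by linarith [hc.2]⟩
  have hleft : 8 / 3 - ε ∈ Icc (8 / 3 - ε) (8 / 3 + ε) := ⟨le_rfl, by linarith⟩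
  have hright : 8 / 3 + ε ∈ Icc (8 / 3 - ε) (8 / 3 + ε) := ⟨by linarith, le_rfl⟩
  have hEl : Ex 1 (8 / 3 - ε) := by
    have := (hstrip _ (hmem _ hleft)).endpoint_exits (σ := -1) (by simp) (by ring)
    simpa [hEx] using this
  have hEr : Ex (-1) (8 / 3 + ε) :=
    (hstrip _ (hmem _ hright)).endpoint_exits (σ := 1) (by simp) (by ring)
  obtain ⟨c, hcI, hc1, hc2⟩ : ∃ c ∈ Icc (8 / 3 - ε) (8 / 3 + ε), ¬ Ex 1 c ∧ ¬ Ex (-1) c := by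
    by_contra! hcon
    obtain ⟨c, -, hc1, hc2⟩ := isPreconnected_Icc {c | Ex 1 c} {c | Ex (-1) c} (hopen 1)
      (hopen (-1)) (fun c hc => (em (Ex 1 c)).imp id (hcon c hc))
      ⟨_, hleft, hEl⟩ ⟨_, hright, hEr⟩
    exact BackwardStrip.not_exits_both hc1 hc2
  have hs := hstrip c (hmem c hcI)
  have hlt := hs.forever_or_exits hc1 hc2
  have hf : ∀ t ≥ 0, BackwardStrip.InTube θ (fun t => Φ (p c) t 0)
      (fun t => Φ (p c) t 1) (fun t => Φ (p c) t 2) t := fun t ht =>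
    (BackwardStrip.inTube_iff hs.θ_pos t).2 (hlt t ht).le
  refine ⟨c, hmem c hcI, _, _, _, hs.x_zero, hs.Y_zero, hs.w_zero, fun t ht => ?_,
    hs.tendsto_zero hf⟩
  obtain ⟨d1, d2, d3⟩ := hs.derivs (hs.forever_region hf ht) (hf t ht)
  exact ⟨d1, d2, d3, hs.w_mem hf ht⟩

/-! ### The stable branch as a graph over the fast variable -/

open unitInterval

/-- Extension of a continuous function on `[0, 1]` to `ℝ`, constant outside `[0, 1]`. -/
noncomputable def iccExt (g : C(I, ℝ)) : ℝ → ℝ := IccExtend (zero_le_one (α := ℝ)) g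

theorem continuous_iccExt (g : C(I, ℝ)) : Continuous (iccExt g) := g.continuous.Icc_extend'

theorem iccExt_apply (g : C(I, ℝ)) {w : ℝ} (hw : w ∈ I) : iccExt g w = g ⟨w, hw⟩ :=
  IccExtend_of_mem _ _ hw

/-- The averaging operator `(avg g) w = ∫₀¹ g (s w) ds`, that is, the mean of `g` over `[0, w]`. It is the
solution operator of `(w P)' = g`. -/
noncomputable def avg : C(I, ℝ) →L[ℝ] C(I, ℝ) :=
  LinearMap.mkContinuous
    { toFun := fun g => ⟨fun w => ∫ s in (0 : ℝ)..1, iccExt g (s * w), by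
        refine intervalIntegral.continuous_parametric_intervalIntegral_of_continuous'
          (f := fun (w : I) s => iccExt g (s * w)) ?_ 0 1
        have := continuous_iccExt g
        fun_prop⟩
      map_add' := fun f g => by
        ext w
        have cf := continuous_iccExt f
        have cg := continuous_iccExt g
        simp only [ContinuousMap.coe_mk, ContinuousMap.add_apply]
        rw [← intervalIntegral.integral_add]
        · rfl
        · exact Continuous.intervalIntegrable (by fun_prop) _ _
        · exact Continuous.intervalIntegrable (by fun_prop) _ _
      map_smul' := fun r g => by
        ext w
        simp only [ContinuousMap.coe_mk, ContinuousMap.smul_apply, RingHom.id_apply]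
        rw [← intervalIntegral.integral_smul]
        rfl }
    1 (fun g => by
      rw [one_mul]
      refine (ContinuousMap.norm_le _ (norm_nonneg _)).2 fun w => ?_
      have := intervalIntegral.norm_integral_le_of_norm_le_const (a := (0 : ℝ)) (b := 1)
        (f := fun s => iccExt g (s * w)) (C := ‖g‖) (fun s _ => g.norm_coe_le_norm _)
      simpa using this)

theorem avg_apply (g : C(I, ℝ)) (w : I) : avg g w = ∫ s in (0 : ℝ)..1, iccExt g (s * w) := rfl

theorem mul_avg (g : C(I, ℝ)) (w : I) : (w : ℝ) * avg g w = ∫ s in (0 : ℝ)..w, iccExt g s := by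
  rw [avg_apply, intervalIntegral.mul_integral_comp_mul_right (c := (w : ℝ))]
  simp

/-- A stable branch from functions on `[0, 1]` solving the invariance equations. The branch is the curve
`x = δ w p(w)`, `Y = δ w q(w)`; along it `dt/dw = -δ e(w) / w`, `dx/dw = δ e(w)` and
`dY/dw = δ e(w) k(w)`. Time is recovered by integrating in `u = -log w` and inverting. -/
theorem exists_stable_branch {δ a₁ a₂ a₃ : ℝ} (hδ : 0 < δ) {e p q k : C(I, ℝ)}
    (he2 : ∀ w, 2 ≤ e w) (he : ∀ w : I, e w * (3 / 8 - δ * (1 + w) * q w / 2) = 1)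
    (hp : p = avg e) (hq : q = avg (e * k))
    (hk : ∀ w : I, k w = (1 + a₁) - (1 / 2 - a₂) * (δ * p w) - 3 / 2 * (δ * q w)
      - w * ((1 / 2 + a₃) * (δ * p w) - 3 / 2 * (δ * q w))) :
    ∃ x Y w : ℝ → ℝ, x 0 = δ * p 1 ∧ Y 0 = δ * q 1 ∧ w 0 = 1 ∧
      (∀ t ≥ 0, HasDerivAt x (-w t) t ∧
        HasDerivAt Y (-fieldY a₁ a₂ a₃ (x t) (Y t) (w t)) t ∧
        HasDerivAt w (-(defect (Y t) (w t) / (2 * δ))) t ∧ w t ∈ Icc (-1) 1) ∧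
      Tendsto x atTop (𝓝 0) ∧ Tendsto Y atTop (𝓝 0) ∧ Tendsto w atTop (𝓝 0) := by
  have ce := continuous_iccExt e
  have cek := continuous_iccExt (e * k)
  have hext2 : ∀ v, 2 ≤ iccExt e v := fun v => he2 _
  -- time as a function of `u = -log w`
  set τ : ℝ → ℝ := fun u => δ * ∫ v in (0 : ℝ)..u, iccExt e (Real.exp (-v)) with hτ
  have cτ : Continuous fun v => iccExt e (Real.exp (-v)) := by fun_prop
  have hτd : ∀ u, HasDerivAt τ (δ * iccExt e (Real.exp (-u))) u := fun u =>
    ((intervalIntegral.integral_hasDerivAt_right (cτ.intervalIntegrable _ _)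
      (cτ.stronglyMeasurableAtFilter _ _) cτ.continuousAt)).const_mul δ
  have hτpos : ∀ u, 0 < δ * iccExt e (Real.exp (-u)) := fun u =>
    mul_pos hδ (by linarith [hext2 (Real.exp (-u))])
  have hτ0 : τ 0 = 0 := by simp [hτ]
  have hτm : StrictMono τ := strictMono_of_hasDerivAt_pos hτd hτpos
  have hτc : Continuous τ := continuous_iff_continuousAt.2 fun t => (hτd t).continuousAt
  have hmono : Monotone fun u => τ u - 2 * δ * u := by
    refine monotone_of_hasDerivAt_nonneg
      (f' := fun u => δ * iccExt e (Real.exp (-u)) - 2 * δ) (fun u => ?_) (fun u => ?_)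
    · exact ((hτd u).sub ((hasDerivAt_id u).const_mul (2 * δ))).congr_deriv (by simp)
    · have := mul_le_mul_of_nonneg_left (hext2 (Real.exp (-u))) hδ.le
      simp only [Pi.zero_apply]; linarith
  have hlin : Tendsto (fun u : ℝ => 2 * δ * u) atTop atTop :=
    tendsto_id.const_mul_atTop (by positivity)
  have hlin' : Tendsto (fun u : ℝ => 2 * δ * u) atBot atBot :=
    tendsto_id.const_mul_atBot (by positivity)
  have htop : Tendsto τ atTop atTop := by
    refine tendsto_atTop_mono' _ ?_ hlin
    filter_upwards [eventually_ge_atTop 0] with u hu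
    have := hmono hu
    simp only [hτ0] at this; linarith
  have hbot : Tendsto τ atBot atBot := by
    refine tendsto_atBot_mono' _ ?_ hlin'
    filter_upwards [eventually_le_atBot 0] with u hu
    have := hmono hu
    simp only [hτ0] at this; linarith
  set T : ℝ ≃o ℝ := hτm.orderIsoOfSurjective τ (hτc.surjective htop hbot) with hT
  have hTτ : ∀ u, T u = τ u := fun u => rfl
  have hτT : ∀ t, τ (T.symm t) = t := fun t => by rw [← hTτ]; exact T.apply_symm_apply t
  have hud : ∀ t, HasDerivAt T.symm (δ * iccExt e (Real.exp (-(T.symm t))))⁻¹ t := fun t =>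
    HasDerivAt.of_local_left_inverse T.symm.continuous.continuousAt (hτd _) (hτpos _).ne'
      (Eventually.of_forall hτT)
  have hu0 : T.symm 0 = 0 := by
    have := T.symm_apply_apply 0
    rwa [hTτ, hτ0] at this
  have hwd : ∀ t, HasDerivAt (fun t => Real.exp (-(T.symm t)))
      (-(Real.exp (-(T.symm t)) / (δ * iccExt e (Real.exp (-(T.symm t)))))) t := fun t =>
    ((hud t).neg.exp).congr_deriv (by rw [div_eq_mul_inv]; simp)
  have hint : ∀ g : C(I, ℝ), ∀ v, HasDerivAt (fun v => δ * ∫ s in (0 : ℝ)..v, iccExt g s)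
      (δ * iccExt g v) v := fun g v =>
    (intervalIntegral.integral_hasDerivAt_right ((continuous_iccExt g).intervalIntegrable _ _)
      ((continuous_iccExt g).stronglyMeasurableAtFilter _ _) (continuous_iccExt g).continuousAt).const_mul δ
  have hwlim : Tendsto (fun t => Real.exp (-(T.symm t))) atTop (𝓝 0) :=
    Real.tendsto_exp_neg_atTop_nhds_zero.comp T.symm.tendsto_atTop
  have hlim : ∀ g : C(I, ℝ), Tendsto (fun t => δ * ∫ s in (0 : ℝ)..Real.exp (-(T.symm t)), iccExt g s)
      atTop (𝓝 0) := by
    intro g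
    have h1 := (hint g 0).continuousAt.tendsto.comp hwlim
    simpa [Function.comp_def] using h1
  have hval : ∀ g : C(I, ℝ), ∀ w : I, δ * ∫ s in (0 : ℝ)..w, iccExt g s = δ * (w * avg g w) :=
    fun g w => by rw [mul_avg]
  refine ⟨fun t => δ * ∫ s in (0 : ℝ)..Real.exp (-(T.symm t)), iccExt e s,
    fun t => δ * ∫ s in (0 : ℝ)..Real.exp (-(T.symm t)), iccExt (e * k) s,
    fun t => Real.exp (-(T.symm t)), ?_, ?_, ?_, ?_, hlim e, hlim _, hwlim⟩
  · have := hval e 1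
    simp only [hu0, neg_zero, Real.exp_zero]
    simpa [hp] using this
  · have := hval (e * k) 1
    simp only [hu0, neg_zero, Real.exp_zero]
    simpa [← hq] using this
  · simp [hu0]
  · intro t ht
    have hut : 0 ≤ T.symm t := by
      rw [← hu0]; exact T.symm.monotone ht
    set w := Real.exp (-(T.symm t)) with hw
    have hwpos : 0 < w := Real.exp_pos _
    have hw1 : w ≤ 1 := Real.exp_le_one_iff.2 (by linarith)
    have hwI : w ∈ I := ⟨hwpos.le, hw1⟩
    have hX := hval e ⟨w, hwI⟩
    have hY := hval (e * k) ⟨w, hwI⟩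
    rw [← hp] at hX
    rw [← hq] at hY
    simp only at hX hY
    have hew : iccExt e w = e ⟨w, hwI⟩ := iccExt_apply e hwI
    have hekw : iccExt (e * k) w = e ⟨w, hwI⟩ * k ⟨w, hwI⟩ := iccExt_apply (e * k) hwI
    have hepos : 0 < e ⟨w, hwI⟩ := by linarith [he2 ⟨w, hwI⟩]
    have hkw := hk ⟨w, hwI⟩
    have heD := he ⟨w, hwI⟩
    simp only at hkw heD
    refine ⟨?_, ?_, ?_, by linarith, hw1⟩
    · refine ((hint e w).comp t (hwd t)).congr_deriv ?_
      simp only [← hw, hew]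
      field_simp
    · refine ((hint (e * k) w).comp t (hwd t)).congr_deriv ?_
      simp only [← hw, hew, hekw]
      simp only [hX, hY, fieldY, hkw]
      field_simp
    · refine (hwd t).congr_deriv ?_
      simp only [← hw, hew]
      simp only [hY, defect]
      have : 1 / e ⟨w, hwI⟩ = 3 / 8 - δ * (1 + w) * q ⟨w, hwI⟩ / 2 := by
        rw [div_eq_iff hepos.ne', mul_comm]; exact heD.symm
      have e2 : w / (δ * e ⟨w, hwI⟩) = w / δ * (1 / e ⟨w, hwI⟩) := by field_simp
      rw [e2, this]
      field_simp
      ring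

/-! ### Implicit function theorem for the stable branch and the parameters -/

/-- The equation `ψ = U c + δ • H (δ, c, ψ)` has a solution depending continuously on `(δ, c)` near `(0, c₀)`, by the
implicit function theorem: at `δ = 0` the derivative in `ψ` is the identity. -/
theorem exists_parametrized_solution {E : Type*} [NormedAddCommGroup E] [NormedSpace ℝ E]
    [CompleteSpace E] {H : (ℝ × ℝ) × E → E} {U : ℝ → E} (hH : ContDiff ℝ 1 H)
    (hU : ContDiff ℝ 1 U) (c₀ : ℝ) :
    ∃ ψ : ℝ × ℝ → E, Tendsto ψ (𝓝 (0, c₀)) (𝓝 (U c₀)) ∧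
      (∃ s ∈ 𝓝 ((0 : ℝ), c₀), ContinuousOn ψ s) ∧
      ∀ᶠ v in 𝓝 ((0 : ℝ), c₀), ψ v = U v.2 + v.1 • H (v, ψ v) := by
  set u : (ℝ × ℝ) × E := ((0, c₀), U c₀) with hu
  have dH : HasStrictFDerivAt H (fderiv ℝ H u) u := hH.contDiffAt.hasStrictFDerivAt one_ne_zero
  have dU : HasStrictFDerivAt U (fderiv ℝ U c₀) c₀ := hU.contDiffAt.hasStrictFDerivAt one_ne_zero
  have d1 : HasStrictFDerivAt (fun v : (ℝ × ℝ) × E => v.1.1)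
      ((ContinuousLinearMap.fst ℝ ℝ ℝ) ∘L (ContinuousLinearMap.fst ℝ (ℝ × ℝ) E)) u :=
    ((ContinuousLinearMap.fst ℝ ℝ ℝ) ∘L (ContinuousLinearMap.fst ℝ (ℝ × ℝ) E)).hasStrictFDerivAt
  have d2 : HasStrictFDerivAt (fun v : (ℝ × ℝ) × E => v.1.2)
      ((ContinuousLinearMap.snd ℝ ℝ ℝ) ∘L (ContinuousLinearMap.fst ℝ (ℝ × ℝ) E)) u :=
    ((ContinuousLinearMap.snd ℝ ℝ ℝ) ∘L (ContinuousLinearMap.fst ℝ (ℝ × ℝ) E)).hasStrictFDerivAt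
  have d3 : HasStrictFDerivAt (fun v : (ℝ × ℝ) × E => U v.1.2) _ u :=
    HasStrictFDerivAt.comp (g := U) u dU d2
  have dF := (hasStrictFDerivAt_snd (𝕜 := ℝ) (p := u)).fun_sub (d3.fun_add (d1.fun_smul dH))
  have hid : ((ContinuousLinearMap.snd ℝ (ℝ × ℝ) E -
      ((fderiv ℝ U c₀).comp ((ContinuousLinearMap.snd ℝ ℝ ℝ) ∘L
        (ContinuousLinearMap.fst ℝ (ℝ × ℝ) E)) +
        (u.1.1 • fderiv ℝ H u + ContinuousLinearMap.smulRight
          ((ContinuousLinearMap.fst ℝ ℝ ℝ) ∘L (ContinuousLinearMap.fst ℝ (ℝ × ℝ) E)) (H u))))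
      ∘L ContinuousLinearMap.inr ℝ (ℝ × ℝ) E) = ContinuousLinearMap.id ℝ E := by
    ext x
    simp [hu]
  have ht := dF.tendsto_implicitFunctionOfProdDomain ⟨ContinuousLinearEquiv.refl ℝ E, hid.symm⟩
  have hinv : ContinuousLinearMap.IsInvertible _ := ⟨ContinuousLinearEquiv.refl ℝ E, hid.symm⟩
  have hs := dF.hasStrictFDerivAt_implicitFunctionOfProdDomain hinv
  have he := dF.eventually_apply_implicitFunctionOfProdDomain hinv
  set ψ := dF.implicitFunctionOfProdDomain hinv
  refine ⟨ψ, ht, ?_, ?_⟩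
  · obtain ⟨K, s, hs, hK⟩ := hs.exists_lipschitzOnWith
    exact ⟨s, hs, hK.continuousOn⟩
  · filter_upwards [he] with v hv
    have : u.2 - (U u.1.2 + u.1.1 • H u) = 0 := by simp [hu]
    simp only [this] at hv
    exact sub_eq_zero.1 hv

/-- The unknowns `(e, p, q, A, B)`: the stable branch and the two parameters. -/
abbrev Unknown : Type := C(I, ℝ) × C(I, ℝ) × C(I, ℝ) × ℝ × ℝ

/-- The coordinate function `w` on `[0, 1]`. -/
def coord : C(I, ℝ) := ⟨fun w => w, continuous_subtype_val⟩

/-- The function with `k = 1 + δ • corrK`, where `w k(w)` is the value of `fieldY` on the curve `x = δ w p(w)`, `Y = δ w q(w)`. -/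
noncomputable def corrK (δ A B : ℝ) (p q : C(I, ℝ)) : C(I, ℝ) :=
  (A + B) • (1 : C(I, ℝ)) - ((1 / 2 - δ * (3 * A - B) / 2) • p + (3 / 2 : ℝ) • q)
    - coord * ((1 / 2 + δ * (B + 3 * A) / 2) • p - (3 / 2 : ℝ) • q)

/-- The equation `e (3/8 - δ (1 + w) q / 2) = 1` reads `e = 8/3 + δ • corrE e q`. -/
noncomputable def corrE (e q : C(I, ℝ)) : C(I, ℝ) := (4 / 3 : ℝ) • ((1 + coord) * e * q)

/-- The equation `q = avg (e k)` reads `q = 8/3 + δ • corrQ`. -/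
noncomputable def corrQ (δ A B : ℝ) (e p q : C(I, ℝ)) : C(I, ℝ) :=
  avg (corrE e q + e * corrK δ A B p q)

/-- Evaluation at `w = 1`, where the stable branch meets the upper boundary of the strip. -/
noncomputable def atOne : C(I, ℝ) →L[ℝ] ℝ := ContinuousMap.evalCLM ℝ 1

theorem atOne_apply (g : C(I, ℝ)) : atOne g = g 1 := rfl

/-- The correction in `A = 4/3 (c + 2/3) + δ * corrA`, obtained by adding the two matching conditions `slope` and
`height` of `StableData`. Here `P = p 1` and `P₁` is the correction to `p 1`. -/
noncomputable def corrA (δ A B P P₁ : ℝ) : ℝ :=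
  4 / 3 * (P₁ / 4 - P ^ 2 / 6 + B * P / 4 - δ * B * P ^ 2 / 6 + A * P / 2)

/-- The correction in `B = 8/3 (-c - 4/3) + δ * corrB`, from the condition `slope` of `StableData`. Here `Q₁` is the correction to `q 1`. -/
noncomputable def corrB (δ A B P P₁ Q₁ : ℝ) : ℝ :=
  8 / 3 * (-(3 / 2) * corrA δ A B P P₁ - Q₁ + P₁ - P ^ 2 / 2 + B * P - δ * B * P ^ 2 / 2 + A * P)

/-- The right-hand side of the fixed-point equation `U = base c + δ • corr ((δ, c), U)` for the unknowns. -/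
noncomputable def corr (v : (ℝ × ℝ) × Unknown) : Unknown :=
  (corrE v.2.1 v.2.2.2.1,
   avg (corrE v.2.1 v.2.2.2.1),
   corrQ v.1.1 v.2.2.2.2.1 v.2.2.2.2.2 v.2.1 v.2.2.1 v.2.2.2.1,
   corrA v.1.1 v.2.2.2.2.1 v.2.2.2.2.2 (atOne v.2.2.1) (atOne (avg (corrE v.2.1 v.2.2.2.1))),
   corrB v.1.1 v.2.2.2.2.1 v.2.2.2.2.2 (atOne v.2.2.1) (atOne (avg (corrE v.2.1 v.2.2.2.1)))
     (atOne (corrQ v.1.1 v.2.2.2.2.1 v.2.2.2.2.2 v.2.1 v.2.2.1 v.2.2.2.1)))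

theorem contDiff_corr : ContDiff ℝ 1 corr := by
  unfold corr corrQ corrB corrA corrK corrE
  fun_prop

/-- The solution of the fixed-point equation at `δ = 0`. -/
noncomputable def base (c : ℝ) : Unknown :=
  ((8 / 3 : ℝ) • 1, (8 / 3 : ℝ) • 1, (8 / 3 : ℝ) • 1, 4 / 3 * (c + 2 / 3), 8 / 3 * (-c - 4 / 3))

theorem contDiff_base : ContDiff ℝ 1 base := by
  unfold base
  fun_prop

theorem avg_one : avg 1 = 1 := by
  ext w
  rw [avg_apply]
  have : ∀ s : ℝ, iccExt 1 s = 1 := fun s => rfl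
  simp [this]

/-- The equations for the stable branch and the parameters. The first four fields are the hypotheses of `exists_stable_branch`. The
field `slope` says that the outer arc through the point `(δ p 1, δ q 1, δ)` has `Y = 3/8 + δ c` when `x = 3/2`, and
`height` says that it has `z = δ` there. -/
structure StableData (δ c A B : ℝ) (e p q k : C(I, ℝ)) : Prop where
  e_mul : ∀ w : I, e w * (3 / 8 - δ * (1 + w) * q w / 2) = 1
  p_eq : p = avg e
  q_eq : q = avg (e * k)
  k_eq : ∀ w : I, k w = (1 + δ * (A + B)) - (1 / 2 - δ * (3 * A - B) / 2) * (δ * p w)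
      - 3 / 2 * (δ * q w)
      - w * ((1 / 2 + δ * (B + 3 * A) / 2) * (δ * p w) - 3 / 2 * (δ * q w))
  slope : q 1 - p 1 + δ * p 1 ^ 2 / 2 + B * (3 / 8 - δ * p 1 + δ ^ 2 * p 1 ^ 2 / 2)
      + A * (3 / 2 - δ * p 1) = c
  height : -q 1 - B * (3 / 8 - 3 * δ * p 1 / 4 + δ ^ 2 * p 1 ^ 2 / 3) + 3 * p 1 / 4
      - δ * p 1 ^ 2 / 3 - A * (3 / 2 - δ * p 1) / 2 = 0

theorem stableData_of_eq {δ c A B : ℝ} {e p q : C(I, ℝ)}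
    (h : ((e, p, q, A, B) : Unknown) = base c + δ • corr ((δ, c), (e, p, q, A, B))) :
    StableData δ c A B e p q (1 + δ • corrK δ A B p q) := by
  simp only [base, corr, Prod.smul_mk, Prod.mk_add_mk, Prod.mk.injEq] at h
  obtain ⟨he, hp, hq, hA, hB⟩ := h
  have hp1 : p 1 = 8 / 3 + δ * atOne (avg (corrE e q)) := by
    rw [atOne_apply]
    simpa using congrArg (fun g : C(I, ℝ) => g 1) hp
  have hq1 : q 1 = 8 / 3 + δ * atOne (corrQ δ A B e p q) := by
    rw [atOne_apply]
    simpa using congrArg (fun g : C(I, ℝ) => g 1) hq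
  rw [atOne_apply p] at hA hB
  set P₁ := atOne (avg (corrE e q))
  set Q₁ := atOne (corrQ δ A B e p q)
  refine ⟨fun w => ?_, ?_, ?_, fun w => ?_, ?_, ?_⟩
  · have := congrArg (fun g : C(I, ℝ) => g w) he
    simp [corrE, coord] at this
    linear_combination (3 / 8) * this
  · conv_rhs => rw [he]
    rw [hp]
    simp [avg_one]
  · have : e * (1 + δ • corrK δ A B p q) =
        (8 / 3 : ℝ) • 1 + δ • (corrE e q + e * corrK δ A B p q) := by
      rw [mul_add, mul_one, mul_smul_comm, smul_add, ← add_assoc, ← he]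
    rw [this, map_add, map_smul, map_smul, avg_one]
    exact hq
  · simp [corrK, coord]
    ring
  · generalize p 1 = P at *
    generalize q 1 = Q at *
    simp only [smul_eq_mul, corrB] at hA hB
    linear_combination hq1 - hp1 + 3 / 8 * hB + 3 / 2 * hA
  · generalize p 1 = P at *
    generalize q 1 = Q at *
    simp only [smul_eq_mul, corrB, corrA] at hA hB
    linear_combination -hq1 + 3 / 4 * hp1 - 3 / 8 * hB - 3 / 4 * hA

/-- For small `δ` the equations `StableData` can be solved for every `c` in a neighbourhood of `8/3` independent of `δ`, with
`A` and `B` continuous in `c` and close to their limits. -/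
theorem exists_stableData {η : ℝ} (hη : 0 < η) :
    ∃ ρ > 0, ∀ δ ∈ Ioo 0 ρ, ∃ A B : ℝ → ℝ,
      ContinuousOn A (Icc (8 / 3 - ρ) (8 / 3 + ρ)) ∧ ContinuousOn B (Icc (8 / 3 - ρ) (8 / 3 + ρ)) ∧
      ∀ c ∈ Icc (8 / 3 - ρ) (8 / 3 + ρ), |A c - 40 / 9| < η ∧ |B c + 32 / 3| < η ∧
        ∃ e p q k : C(I, ℝ), (∀ w, 2 ≤ e w) ∧ |p 1 - 8 / 3| < 1 ∧
          StableData δ c (A c) (B c) e p q k := by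
  obtain ⟨ψ, hlim, ⟨s, hs, hψ⟩, heq⟩ :=
    exists_parametrized_solution contDiff_corr contDiff_base (8 / 3)
  have hA : Tendsto (fun v => (ψ v).2.2.2.1) (𝓝 (0, 8 / 3)) (𝓝 (base (8 / 3)).2.2.2.1) :=
    Tendsto.comp (g := fun U : Unknown => U.2.2.2.1)
      (Continuous.tendsto (by fun_prop) _) hlim
  have hB : Tendsto (fun v => (ψ v).2.2.2.2) (𝓝 (0, 8 / 3)) (𝓝 (base (8 / 3)).2.2.2.2) :=
    Tendsto.comp (g := fun U : Unknown => U.2.2.2.2)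
      (Continuous.tendsto (by fun_prop) _) hlim
  have he : Tendsto (fun v => (ψ v).1) (𝓝 (0, 8 / 3)) (𝓝 (base (8 / 3)).1) :=
    Tendsto.comp (g := fun U : Unknown => U.1) (Continuous.tendsto (by fun_prop) _) hlim
  have hp : Tendsto (fun v => (ψ v).2.1) (𝓝 (0, 8 / 3)) (𝓝 (base (8 / 3)).2.1) :=
    Tendsto.comp (g := fun U : Unknown => U.2.1) (Continuous.tendsto (by fun_prop) _) hlim
  rw [Metric.tendsto_nhds] at hA hB he hp
  have hall := (((hA η hη).and (hB η hη)).and ((he (1 / 2) (by norm_num)).and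
    (hp 1 one_pos))).and (heq.and hs)
  obtain ⟨r, hr, hball⟩ := Metric.eventually_nhds_iff_ball.1 hall
  have hmem : ∀ δ ∈ Ioo 0 (r / 2), ∀ c ∈ Icc (8 / 3 - r / 2) (8 / 3 + r / 2),
      (δ, c) ∈ Metric.ball ((0 : ℝ), (8 / 3 : ℝ)) r := by
    intro δ hδ c hc
    rw [← ball_prod_same, mem_prod, Metric.mem_ball, Metric.mem_ball, Real.dist_eq, Real.dist_eq,
      abs_lt, abs_lt]
    obtain ⟨h1, h2⟩ := hδ
    obtain ⟨h3, h4⟩ := hc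
    refine ⟨⟨?_, ?_⟩, ?_, ?_⟩ <;> simp only <;> linarith
  refine ⟨r / 2, by positivity, fun δ hδ => ⟨fun c => (ψ (δ, c)).2.2.2.1,
    fun c => (ψ (δ, c)).2.2.2.2, ?_, ?_, fun c hc => ?_⟩⟩
  · have : ContinuousOn (fun c => ψ (δ, c)) (Icc (8 / 3 - r / 2) (8 / 3 + r / 2)) :=
      hψ.comp (by fun_prop) fun c hc => (hball _ (hmem δ hδ c hc)).2.2
    exact Continuous.comp_continuousOn (g := fun U : Unknown => U.2.2.2.1) (by fun_prop) this
  · have : ContinuousOn (fun c => ψ (δ, c)) (Icc (8 / 3 - r / 2) (8 / 3 + r / 2)) :=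
      hψ.comp (by fun_prop) fun c hc => (hball _ (hmem δ hδ c hc)).2.2
    exact Continuous.comp_continuousOn (g := fun U : Unknown => U.2.2.2.2) (by fun_prop) this
  · obtain ⟨⟨⟨hA, hB⟩, he, hp⟩, heq, -⟩ := hball _ (hmem δ hδ c hc)
    refine ⟨?_, ?_, (ψ (δ, c)).1, (ψ (δ, c)).2.1, (ψ (δ, c)).2.2.1, _, fun w => ?_, ?_,
      stableData_of_eq heq⟩
    · rw [Real.dist_eq] at hA
      convert hA using 2
      norm_num [base]
    · rw [Real.dist_eq] at hB
      convert hB using 2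
      norm_num [base]
    · have h := (ContinuousMap.dist_apply_le_dist (f := (ψ (δ, c)).1) (g := (base (8 / 3)).1) w)
      have h2 := h.trans_lt he
      rw [Real.dist_eq, abs_lt] at h2
      simp [base] at h2
      linarith [h2.1]
    · have h := (ContinuousMap.dist_apply_le_dist (f := (ψ (δ, c)).2.1) (g := (base (8 / 3)).2.1) 1)
      have h2 := h.trans_lt hp
      rw [Real.dist_eq] at h2
      simpa [base] using h2

/-! ### The normal form and the arc above the strip -/

/-- The clamp function. -/
noncomputable def sat (u : ℝ) : ℝ := max (-1) (min 1 u)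

theorem sat_of_mem {u : ℝ} (hu : u ∈ Icc (-1) 1) : sat u = u := by
  rw [sat, min_eq_right hu.2, max_eq_right hu.1]

theorem sat_of_ge {u : ℝ} (hu : 1 ≤ u) : sat u = 1 := by
  rw [sat, min_eq_left hu]
  norm_num

/-- The regularized field for `α = β = 1` in the coordinates `(x, Y, z)` with `Y = y + δ (A x + B y)`. -/
noncomputable def normalField (δ A B : ℝ) (p : ℝ × ℝ × ℝ) : ℝ × ℝ × ℝ :=
  (-sat (p.2.2 / δ),
   -fieldY (δ * (A + B)) (δ * (3 * A - B) / 2) (δ * (B + 3 * A) / 2) p.1 p.2.1 (sat (p.2.2 / δ)),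
   -(defect p.2.1 (sat (p.2.2 / δ)) / 2))

/-- Two solutions of an autonomous equation that agree at time `a` can be concatenated there. -/
theorem hasDerivAt_glue {E : Type*} [NormedAddCommGroup E] [NormedSpace ℝ E] {V : E → E}
    {f g : ℝ → E} {a : ℝ} {D : Set ℝ} (hf : ∀ t ∈ D, t ≤ a → HasDerivAt f (V (f t)) t)
    (hg : ∀ t ∈ D, a ≤ t → HasDerivAt g (V (g t)) t) (hfg : f a = g a) :
    ∀ t ∈ D, HasDerivAt (fun t => if t ≤ a then f t else g t)
      (V (if t ≤ a then f t else g t)) t := by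
  intro t ht
  rcases lt_trichotomy t a with h | rfl | h
  · simp only [h.le, if_true]
    refine (hf t ht h.le).congr_of_eventuallyEq ?_
    filter_upwards [Iio_mem_nhds h] with s hs
    simp [le_of_lt (mem_Iio.1 hs)]
  · simp only [le_refl, if_true]
    have h1 : HasDerivWithinAt (fun s => if s ≤ t then f s else g s) (V (f t)) (Iic t) t :=
      (hf t ht le_rfl).hasDerivWithinAt.congr (fun s hs => by simp [mem_Iic.1 hs]) (by simp)
    have h2 : HasDerivWithinAt (fun s => if s ≤ t then f s else g s) (V (f t)) (Ici t) t := by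
      rw [hfg]
      refine (hg t ht le_rfl).hasDerivWithinAt.congr (fun s hs => ?_) (by simp [hfg])
      rcases (mem_Ici.1 hs).eq_or_lt with rfl | hs
      · simp [hfg]
      · simp [not_le.2 hs]
    have := h1.union h2
    rwa [Iic_union_Ici, hasDerivWithinAt_univ] at this
  · simp only [not_le.2 h, if_false]
    refine (hg t ht h.le).congr_of_eventuallyEq ?_
    filter_upwards [Ioi_mem_nhds h] with s hs
    simp [mem_Ioi.1 hs]

/-- The explicit solution above the strip, polynomial in time. It stays in `z ≥ δ` because `z - δ`, a cubic in `t`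
vanishing at both ends, has positive remaining factor. -/
theorem exists_outer_arc {δ c A B P Q : ℝ} (hδ : 0 < δ) (hc : 0 ≤ c) (hB : 0 ≤ 1 + δ * B)
    (hP : δ * P < 3 / 2)
    (slope : Q - P + δ * P ^ 2 / 2 + B * (3 / 8 - δ * P + δ ^ 2 * P ^ 2 / 2)
      + A * (3 / 2 - δ * P) = c)
    (height : -Q - B * (3 / 8 - 3 * δ * P / 4 + δ ^ 2 * P ^ 2 / 3) + 3 * P / 4
      - δ * P ^ 2 / 3 - A * (3 / 2 - δ * P) / 2 = 0) :
    ∃ f : ℝ → ℝ × ℝ × ℝ, f 0 = (3 / 2, 3 / 8 + δ * c, δ) ∧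
      f (3 / 2 - δ * P) = (δ * P, δ * Q, δ) ∧
      ∀ t ∈ Icc 0 (3 / 2 - δ * P), HasDerivAt f (normalField δ A B (f t)) t := by
  set S := 3 / 2 - δ * P with hS
  have hS0 : 0 < S := by linarith
  have hPS : δ * P = 3 / 2 - S := by rw [hS]; ring
  refine ⟨fun t => (3 / 2 - t,
    δ * Q + (1 + δ * B) * ((S - t) * (1 - δ * P) - (S - t) ^ 2 / 2) + δ * A * (S - t),
    δ + (3 / 8 - δ * Q) * (S - t) - (1 + δ * B) * ((1 - δ * P) * (S - t) ^ 2 / 2 - (S - t) ^ 3 / 6)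
      - δ * A * (S - t) ^ 2 / 2), ?_, ?_, fun t ht => ?_⟩
  · refine Prod.ext (by simp) (Prod.ext ?_ ?_)
    · simp only [hS]
      linear_combination δ * slope
    · simp only [hS]
      linear_combination (3 / 2 - δ * P) * δ * height
  · refine Prod.ext (by simp [hS]) (Prod.ext ?_ ?_) <;> simp
  · have hz : δ ≤ δ + (3 / 8 - δ * Q) * (S - t)
        - (1 + δ * B) * ((1 - δ * P) * (S - t) ^ 2 / 2 - (S - t) ^ 3 / 6)
        - δ * A * (S - t) ^ 2 / 2 := by
      -- the cubic factors through its zeros at the two ends of the arc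
      have key : S * ((3 / 8 - δ * Q) * (S - t)
          - (1 + δ * B) * ((1 - δ * P) * (S - t) ^ 2 / 2 - (S - t) ^ 3 / 6)
          - δ * A * (S - t) ^ 2 / 2) =
          (S - t) * (δ * c * t + S * (1 + δ * B) / 6 * t ^ 2) := by
        simp only [hS]
        linear_combination (S - t) * (S + t) * δ * height + (S - t) * t * δ * slope
      have : 0 ≤ (S - t) * (δ * c * t + S * (1 + δ * B) / 6 * t ^ 2) := by
        have h1 := ht.1
        have h2 : 0 ≤ S - t := by linarith [ht.2]
        positivity
      rw [← key] at this
      have := nonneg_of_mul_nonneg_right this hS0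
      linarith
    have hsat := sat_of_ge ((one_le_div hδ).2 hz)
    have hid : HasDerivAt (fun t : ℝ => S - t) (-1) t := by
      simpa using (hasDerivAt_id t).const_sub S
    have h1 : HasDerivAt (fun t : ℝ => 3 / 2 - t) (-1) t := by
      simpa using (hasDerivAt_id t).const_sub (3 / 2 : ℝ)
    have h2 := (((hid.mul_const (1 - δ * P)).fun_sub ((hid.fun_pow 2).div_const 2)).const_mul
      (1 + δ * B)).const_add (δ * Q) |>.fun_add (hid.const_mul (δ * A))
    have h3 := (((hid.const_mul (3 / 8 - δ * Q)).const_add δ).fun_sub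
      (((((hid.fun_pow 2).const_mul (1 - δ * P)).div_const 2).fun_sub
        ((hid.fun_pow 3).div_const 6)).const_mul (1 + δ * B))).fun_sub
        (((hid.fun_pow 2).const_mul (δ * A)).div_const 2)
    refine (h1.prodMk (h2.prodMk h3)).congr_deriv ?_
    simp only [normalField, hsat, fieldY, defect]
    refine Prod.ext rfl (Prod.ext ?_ ?_)
    · simp only [hS]
      push_cast
      ring
    · simp only
      push_cast
      ring

/-! ### The homoclinic orbit of the normal form -/

/-- Inside the strip `normalField` is minus the backward strip field, with `z = δ w`. -/
theorem normalField_strip {δ A B x Y w : ℝ} (hδ : 0 < δ) (hw : w ∈ Icc (-1) 1) :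
    normalField δ A B (x, Y, δ * w) =
      (-w, -fieldY (δ * (A + B)) (δ * (3 * A - B) / 2) (δ * (B + 3 * A) / 2) x Y w,
        δ * -(defect Y w / (2 * δ))) := by
  have : δ * w / δ = w := by field_simp
  simp only [normalField, this, sat_of_mem hw]
  refine Prod.ext rfl (Prod.ext rfl ?_)
  simp only
  field_simp

/-- The homoclinic orbit for `α = β = 1`, with parameters as close to the limits as desired. -/
theorem exists_normal_homoclinic {η : ℝ} (hη : 0 < η) :
    ∃ ρ > 0, ∀ δ ∈ Ioo 0 ρ, ∃ A B : ℝ, |A - 40 / 9| < η ∧ |B + 32 / 3| < η ∧ 0 < 1 + δ * B ∧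
      ∃ g : ℝ → ℝ × ℝ × ℝ, (g 0).1 = 3 / 2 ∧
        (∀ t, HasDerivAt g (normalField δ A B (g t)) t) ∧
        Tendsto g atTop (𝓝 0) ∧ Tendsto g atBot (𝓝 0) := by
  obtain ⟨r, hr, hdata⟩ := exists_stableData (η := min η 1) (by positivity)
  set ε := min r 1 with hε
  have hε0 : 0 < ε := by positivity
  have hεr : ε ≤ r := min_le_left _ _
  have hε1 : ε ≤ 1 := min_le_right _ _
  set θ := ε ^ 2 / 10 ^ 7 with hθ
  have hθ0 : 0 < θ := by positivity
  have hθ1 : θ ≤ 1 := by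
    rw [hθ, div_le_one (by positivity)]
    nlinarith
  refine ⟨min r (θ / 10000), by positivity, fun δ hδ => ?_⟩
  have hδ0 : 0 < δ := hδ.1
  have hδr : δ < r := hδ.2.trans_le (min_le_left _ _)
  have hδθ : δ ≤ θ / 10000 := (hδ.2.trans_le (min_le_right _ _)).le
  obtain ⟨A, B, cA, cB, h⟩ := hdata δ ⟨hδ0, hδr⟩
  -- the parameters are continued constantly outside the interval where they are defined
  have hr' : 8 / 3 - r ≤ 8 / 3 + r := by linarith
  set pr : ℝ → ℝ := fun c => projIcc (8 / 3 - r) (8 / 3 + r) hr' c with hpr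
  have cpr : Continuous pr := continuous_subtype_val.comp continuous_projIcc
  have mpr : ∀ c, pr c ∈ Icc (8 / 3 - r) (8 / 3 + r) := fun c => (projIcc _ _ hr' c).2
  have cA' : Continuous fun c => A (pr c) := cA.comp_continuous cpr mpr
  have cB' : Continuous fun c => B (pr c) := cB.comp_continuous cpr mpr
  have bA : ∀ c, |A (pr c)| ≤ 6 := fun c => by
    have := ((h _ (mpr c)).1.trans_le (min_le_right _ _)).le
    rw [abs_le] at this ⊢
    constructor <;> linarith [this.1, this.2]
  have bB : ∀ c, |B (pr c)| ≤ 12 := fun c => by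
    have := ((h _ (mpr c)).2.1.trans_le (min_le_right _ _)).le
    rw [abs_le] at this ⊢
    constructor <;> linarith [this.1, this.2]
  have small : ∀ u : ℝ, |u| ≤ 30 → |δ * u| ≤ θ := fun u hu => by
    rw [abs_mul, abs_of_pos hδ0]
    nlinarith [abs_nonneg u]
  obtain ⟨c, hc, xu, Yu, wu, hxu0, hYu0, hwu0, hu, lxu, lYu, lwu⟩ := exists_unstable_branch hε0 hε1
    hθ hδ0 hδθ
    (a₁ := fun c => δ * (A (pr c) + B (pr c)))
    (a₂ := fun c => δ * (3 * A (pr c) - B (pr c)) / 2)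
    (a₃ := fun c => δ * (B (pr c) + 3 * A (pr c)) / 2)
    (continuous_const.mul (cA'.add cB'))
    ((continuous_const.mul ((continuous_const.mul cA').sub cB')).div_const 2)
    ((continuous_const.mul (cB'.add (continuous_const.mul cA'))).div_const 2)
    (fun c => small _ (by
      have h1 := abs_le.1 (bA c)
      have h2 := abs_le.1 (bB c)
      rw [abs_le]; constructor <;> linarith [h1.1, h1.2, h2.1, h2.2]))
    (fun c => by
      rw [mul_div_assoc]
      refine small _ ?_
      have h1 := abs_le.1 (bA c)
      have h2 := abs_le.1 (bB c)
      rw [abs_le]; constructor <;> linarith [h1.1, h1.2, h2.1, h2.2])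
    (fun c => by
      rw [mul_div_assoc]
      refine small _ ?_
      have h1 := abs_le.1 (bA c)
      have h2 := abs_le.1 (bB c)
      rw [abs_le]; constructor <;> linarith [h1.1, h1.2, h2.1, h2.2])
  have hc' := abs_le.1 hc
  have hcI : c ∈ Icc (8 / 3 - r) (8 / 3 + r) := ⟨by linarith [hc'.1], by linarith [hc'.2]⟩
  have hpc : pr c = c := by simp only [hpr, projIcc_of_mem hr' hcI]
  have bBc := bB c
  simp only [hpc] at hu bBc
  obtain ⟨hA, hB, e, p, q, k, he2, hp1, hD⟩ := h c hcI
  obtain ⟨xs, Ys, ws, hxs0, hYs0, hws0, hs, lxs, lYs, lws⟩ :=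
    exists_stable_branch hδ0 he2 hD.e_mul hD.p_eq hD.q_eq hD.k_eq
  have hB1 : 0 < 1 + δ * B c := by
    have h2 := (abs_le.1 bBc).1
    nlinarith
  have hP : δ * p 1 < 3 / 2 := by
    have := (abs_lt.1 hp1).2
    nlinarith
  obtain ⟨f, hf0, hfS, hf⟩ := exists_outer_arc hδ0 (by linarith [hc'.1]) hB1.le hP hD.slope hD.height
  set S := 3 / 2 - δ * p 1 with hS
  have hS0 : 0 < S := by linarith
  refine ⟨A c, B c, hA.trans_le (min_le_left _ _), hB.trans_le (min_le_left _ _), hB1, ?_⟩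
  set V := normalField δ (A c) (B c) with hV
  set f₁ : ℝ → ℝ × ℝ × ℝ := fun t => (xu (-t), Yu (-t), δ * wu (-t)) with hf₁
  set f₃ : ℝ → ℝ × ℝ × ℝ := fun t => (xs (t - S), Ys (t - S), δ * ws (t - S)) with hf₃
  have d₁ : ∀ t ≤ 0, HasDerivAt f₁ (V (f₁ t)) t := by
    intro t ht
    obtain ⟨h1, h2, h3, h4⟩ := hu (-t) (by linarith)
    have hn := hasDerivAt_neg t
    rw [hV, hf₁, normalField_strip hδ0 h4]
    exact ((h1.comp t hn).prodMk ((h2.comp t hn).prodMk ((h3.comp t hn).const_mul δ))).congr_deriv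
      (by simp only [mul_neg, mul_one])
  have d₃ : ∀ t ≥ S, HasDerivAt f₃ (V (f₃ t)) t := by
    intro t ht
    obtain ⟨h1, h2, h3, h4⟩ := hs (t - S) (by linarith)
    rw [hV, hf₃, normalField_strip hδ0 h4]
    exact (h1.comp_sub_const t S).prodMk ((h2.comp_sub_const t S).prodMk
      ((h3.comp_sub_const t S).const_mul δ))
  have g₁ : f₁ 0 = f 0 := by simp [hf₁, hf0, hxu0, hYu0, hwu0]
  have g₃ : f S = f₃ S := by simp [hf₃, hfS, hxs0, hYs0, hws0]
  have D₁ := hasDerivAt_glue (V := V) (D := Iic S) (fun t _ h => d₁ t h)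
    (fun t ht h => hf t ⟨h, ht⟩) g₁
  have D₂ := hasDerivAt_glue (V := V) (D := univ) (a := S) (fun t _ h => D₁ t h)
    (fun t _ h => d₃ t h) (by simp [not_le.2 hS0, g₃])
  refine ⟨_, ?_, fun t => D₂ t (mem_univ t), ?_, ?_⟩
  · simp [hS0.le, hf₁, hxu0]
  · have hl : Tendsto f₃ atTop (𝓝 0) := by
      have hsub : Tendsto (fun t => t - S) atTop atTop := tendsto_atTop_add_const_right _ (-S) tendsto_id
      have := (lxs.comp hsub).prodMk_nhds ((lYs.comp hsub).prodMk_nhds ((lws.comp hsub).const_mul δ))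
      rw [mul_zero] at this
      exact this
    refine hl.congr' ?_
    filter_upwards [eventually_gt_atTop S] with t ht
    simp [not_le.2 ht]
  · have hl : Tendsto f₁ atBot (𝓝 0) := by
      have hn := tendsto_neg_atBot_atTop (G := ℝ)
      have := (lxu.comp hn).prodMk_nhds ((lYu.comp hn).prodMk_nhds ((lwu.comp hn).const_mul δ))
      rw [mul_zero] at this
      exact this
    refine hl.congr' ?_
    filter_upwards [eventually_le_atBot 0] with t ht
    simp [ht, ht.trans hS0.le]

/-! ### Selection of the parameters and rescaling -/

/-- A selection `s d ∈ G d` that tends to `T`, obtained by choosing a point of `G d` whose distance to `T` exceeds the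
infimum by less than `d`. -/
theorem exists_tendsto_selection {G : ℝ → Set (ℝ × ℝ)} {T : ℝ × ℝ}
    (h : ∀ η > 0, ∃ ρ > 0, ∀ d ∈ Ioo 0 ρ, ∃ v ∈ G d, dist T v < η) :
    ∃ s : ℝ → ℝ × ℝ, Tendsto s (𝓝[>] 0) (𝓝 T) ∧ ∃ ρ > 0, ∀ d ∈ Ioo (0 : ℝ) ρ, s d ∈ G d := by
  have key : ∀ d, ∃ v, 0 < d → (G d).Nonempty → v ∈ G d ∧ dist T v < Metric.infDist T (G d) + d := by
    intro d
    by_cases hd : 0 < d ∧ (G d).Nonempty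
    · obtain ⟨v, hv, hlt⟩ := (Metric.infDist_lt_iff hd.2).1
        (lt_add_of_pos_right (Metric.infDist T (G d)) hd.1)
      exact ⟨v, fun _ _ => ⟨hv, hlt⟩⟩
    · exact ⟨0, fun h1 h2 => absurd ⟨h1, h2⟩ hd⟩
  choose s hs using key
  refine ⟨s, ?_, ?_⟩
  · rw [Metric.tendsto_nhds]
    intro η hη
    obtain ⟨ρ, hρ, hG⟩ := h (η / 2) (by positivity)
    filter_upwards [Ioo_mem_nhdsGT (show (0 : ℝ) < min ρ (η / 2) by positivity)] with d hd
    obtain ⟨v, hv, hlt⟩ := hG d ⟨hd.1, hd.2.trans_le (min_le_left _ _)⟩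
    have h1 := (hs d hd.1 ⟨v, hv⟩).2
    have h2 := Metric.infDist_le_dist_of_mem (x := T) hv
    have h3 := hd.2.trans_le (min_le_right _ _)
    rw [dist_comm]
    linarith
  · obtain ⟨ρ, hρ, hG⟩ := h 1 one_pos
    refine ⟨ρ, hρ, fun d hd => ?_⟩
    obtain ⟨v, hv, -⟩ := hG d hd
    exact (hs d hd.1 ⟨v, hv⟩).1

/-- The set of parameters `(A, B)` for which the normal form with `δ = d` has a homoclinic orbit to the origin. The
condition `0 < 1 + d * B` makes `Y = y + d (A x + B y)` a coordinate change, and `(g 0).1 = 3/2`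
excludes the constant orbit. -/
def HomoclinicAt (d : ℝ) : Set (ℝ × ℝ) :=
  {v | 0 < 1 + d * v.2 ∧ ∃ g : ℝ → ℝ × ℝ × ℝ, (g 0).1 = 3 / 2 ∧
        (∀ t, HasDerivAt g (normalField d v.1 v.2 (g t)) t) ∧
        Tendsto g atTop (𝓝 0) ∧ Tendsto g atBot (𝓝 0)}

theorem regularization_has_homoclinic_orbit (α β : ℝ) (hα : 0 < α) (hβ : 0 < β)
    (φ : ℝ → ℝ) (hφ : ∀ u : ℝ, φ u = max (-1) (min 1 u))
    (W : ℝ → ℝ → ℝ → ℝ × ℝ × ℝ → ℝ × ℝ × ℝ)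
    (hW : ∀ (δ A B : ℝ) (p : ℝ × ℝ × ℝ), W δ A B p =
      (((1 + φ (p.2.2 / δ)) / 2) * (-α) + ((1 - φ (p.2.2 / δ)) / 2) * α,
       ((1 + φ (p.2.2 / δ)) / 2) * (p.1 - β)
         + ((1 - φ (p.2.2 / δ)) / 2) * ((3 * α / β) * p.2.1 + β),
       ((1 + φ (p.2.2 / δ)) / 2) * (p.2.1 - 3 * β ^ 2 / (8 * α))
         + ((1 - φ (p.2.2 / δ)) / 2) * (3 * β ^ 2 / (8 * α))
         + δ * ((1 + φ (p.2.2 / δ)) / 2) * (A * p.1 + B * p.2.1))) :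
    ∃ δ₀ > (0 : ℝ), ∃ Af Bf : ℝ → ℝ,
      Filter.Tendsto Af (nhdsWithin 0 (Set.Ioi 0)) (nhds (40 * α / (9 * β ^ 2))) ∧
      Filter.Tendsto Bf (nhdsWithin 0 (Set.Ioi 0)) (nhds (-(32 * α ^ 2) / (3 * β ^ 3))) ∧
      ∀ δ ∈ Set.Ioo (0 : ℝ) δ₀,
        W δ (Af δ) (Bf δ) (0, 0, 0) = (0, 0, 0) ∧
        ∃ f : ℝ → ℝ × ℝ × ℝ,
          (∃ t : ℝ, f t ≠ (0, 0, 0)) ∧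
          (∀ t : ℝ, HasDerivAt f (W δ (Af δ) (Bf δ) (f t)) t) ∧
          Filter.Tendsto f Filter.atTop (nhds (0, 0, 0)) ∧
          Filter.Tendsto f Filter.atBot (nhds (0, 0, 0)) := by
  obtain ⟨s, hs, ρ, hρ, hG⟩ := exists_tendsto_selection (G := HomoclinicAt)
    (T := (40 / 9, -(32 / 3))) (fun η hη => by
      obtain ⟨ρ, hρ, H⟩ := exists_normal_homoclinic hη
      refine ⟨ρ, hρ, fun d hd => ?_⟩
      obtain ⟨A, B, hA, hB, h1, hg⟩ := H d hd
      refine ⟨(A, B), ⟨h1, hg⟩, ?_⟩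
      rw [Prod.dist_eq, max_lt_iff, dist_comm, Real.dist_eq, dist_comm, Real.dist_eq]
      exact ⟨hA, by simpa using hB⟩)
  -- the width of the strip in rescaled coordinates is `α ^ 2 / β ^ 3 * δ`
  have hκ : 0 < α ^ 2 / β ^ 3 := by positivity
  have hscale : Tendsto (fun δ => α ^ 2 / β ^ 3 * δ) (𝓝[>] 0) (𝓝[>] 0) := by
    refine tendsto_nhdsWithin_iff.2 ⟨?_, ?_⟩
    · have : Tendsto (fun δ => α ^ 2 / β ^ 3 * δ) (𝓝 0) (𝓝 (α ^ 2 / β ^ 3 * 0)) :=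
        tendsto_id.const_mul _
      rw [mul_zero] at this
      exact this.mono_left nhdsWithin_le_nhds
    · filter_upwards [self_mem_nhdsWithin] with δ hδ
      exact mul_pos hκ hδ
  have hs' := hs.comp hscale
  refine ⟨ρ / (α ^ 2 / β ^ 3), by positivity,
    fun δ => α / β ^ 2 * (s (α ^ 2 / β ^ 3 * δ)).1,
    fun δ => α ^ 2 / β ^ 3 * (s (α ^ 2 / β ^ 3 * δ)).2, ?_, ?_, fun δ hδ => ⟨?_, ?_⟩⟩
  · have := ((continuous_fst.tendsto _).comp hs').const_mul (α / β ^ 2)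
    convert this using 1
    congr 1
    simp only
    field_simp
  · have := ((continuous_snd.tendsto _).comp hs').const_mul (α ^ 2 / β ^ 3)
    convert this using 1
    congr 1
    simp only
    field_simp
  · rw [hW]
    simp [hφ]
  · have hδ0 : 0 < δ := hδ.1
    have hd : α ^ 2 / β ^ 3 * δ ∈ Ioo 0 ρ := by
      refine ⟨mul_pos hκ hδ0, ?_⟩
      have := (lt_div_iff₀ hκ).1 hδ.2
      linarith
    obtain ⟨hB, g, hg0, hg, hgt, hgb⟩ := hG _ hd
    beta_reduce
    set d := α ^ 2 / β ^ 3 * δ with hdδ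
    generalize s d = v at hB hg ⊢
    obtain ⟨A, B⟩ := v
    simp only at hB hg ⊢
    -- `L` undoes the substitution for `Y` and the rescaling of space; time is rescaled by `α / β`
    set L : ℝ × ℝ × ℝ → ℝ × ℝ × ℝ := fun p =>
      (β * p.1, β ^ 2 / α * ((p.2.1 - d * A * p.1) / (1 + d * B)), β ^ 3 / α ^ 2 * p.2.2) with hL
    have hLc : Tendsto L (𝓝 0) (𝓝 (0, 0, 0)) := by
      have : Continuous L := by fun_prop
      have := this.tendsto 0
      simpa [hL] using this
    have hpos : 0 < α / β := by positivity
    refine ⟨fun t => L (g (α / β * t)), ⟨0, fun h => ?_⟩, fun t => ?_,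
      hLc.comp (hgt.comp (tendsto_id.const_mul_atTop hpos)),
      hLc.comp (hgb.comp (tendsto_id.const_mul_atBot hpos))⟩
    · have := congrArg Prod.fst h
      simp only [hL, mul_zero, hg0] at this
      have : 0 < β * (3 / 2) := by positivity
      linarith
    · have hc : HasDerivAt (fun t => α / β * t) (α / β) t := by
        simpa using (hasDerivAt_id t).const_mul (α / β)
      have hG := (hg (α / β * t)).scomp t hc
      have h1 : HasDerivAt (fun t => (g (α / β * t)).1) _ t :=
        (ContinuousLinearMap.fst ℝ ℝ (ℝ × ℝ)).hasFDerivAt.comp_hasDerivAt t hG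
      have hsnd := (ContinuousLinearMap.snd ℝ ℝ (ℝ × ℝ)).hasFDerivAt.comp_hasDerivAt t hG
      have h2 : HasDerivAt (fun t => (g (α / β * t)).2.1) _ t :=
        (ContinuousLinearMap.fst ℝ ℝ ℝ).hasFDerivAt.comp_hasDerivAt t hsnd
      have h3 : HasDerivAt (fun t => (g (α / β * t)).2.2) _ t :=
        (ContinuousLinearMap.snd ℝ ℝ ℝ).hasFDerivAt.comp_hasDerivAt t hsnd
      refine ((h1.const_mul β).prodMk ((((h2.fun_sub (h1.const_mul (d * A))).div_const
        (1 + d * B)).const_mul (β ^ 2 / α)).prodMk (h3.const_mul (β ^ 3 / α ^ 2)))).congr_deriv ?_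
      rw [hW]
      simp only [hL]
      generalize g (α / β * t) = P
      obtain ⟨x, Y, z⟩ := P
      obtain ⟨y, hy⟩ : ∃ y, y = (Y - d * A * x) / (1 + d * B) := ⟨_, rfl⟩
      have hY : Y = (1 + d * B) * y + d * A * x := by rw [hy]; field_simp; ring
      have hsat : φ (β ^ 3 / α ^ 2 * z / δ) = sat (z / d) := by
        rw [hφ, sat, hdδ]
        congr 2
        field_simp
      simp only [hsat, ← hy, normalField, fieldY, defect, Prod.smul_mk, smul_eq_mul,
        ContinuousLinearMap.coe_fst', ContinuousLinearMap.coe_snd']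
      generalize sat (z / d) = m
      have hδd : δ = β ^ 3 / α ^ 2 * d := by rw [hdδ]; field_simp
      clear_value d
      subst hY hδd
      refine Prod.ext ?_ (Prod.ext ?_ ?_)
      · simp only; field_simp; ring
      · simp only; field_simp; ring
      · simp only; field_simp; ring
end
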